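/- Every ω-standard model of MOST + Π1-Collection satisfies Δ0^P-WDC_ω. -/

import Mathlib

universe u

/-- de Bruijn-style formulas of the language of set theory, with primitive
bounded quantifiers (`∈`-bounded and `⊆`-bounded) and unbounded quantifiers.
`SF n` is the type of formulas with (at most) `n` free variables. -/
inductive SF : ℕ → Type
  | mem {n} (i j : Fin n) : SF n
  | eq {n} (i j : Fin n) : SF n
  | not {n} (φ : SF n) : SF n
  | and {n} (φ ψ : SF n) : SF n
  | or {n} (φ ψ : SF n) : SF n
  | bexMem {n} (i : Fin n) (φ : SF (n + 1)) : SF n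
  | ballMem {n} (i : Fin n) (φ : SF (n + 1)) : SF n
  | bexSub {n} (i : Fin n) (φ : SF (n + 1)) : SF n
  | ballSub {n} (i : Fin n) (φ : SF (n + 1)) : SF n
  | ex {n} (φ : SF (n + 1)) : SF n
  | all {n} (φ : SF (n + 1)) : SF n

variable {X : Type u}

/-- `a ⊆ b` in the structure `⟨X, E⟩`. -/
def SubE (E : X → X → Prop) (a b : X) : Prop := ∀ z, E z a → E z b

/-- Satisfaction of a formula in the structure `⟨X, E⟩` under a valuation. -/
def SF.Eval (E : X → X → Prop) : {n : ℕ} → SF n → (Fin n → X) → Prop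
  | _, .mem i j, v => E (v i) (v j)
  | _, .eq i j, v => v i = v j
  | _, .not φ, v => ¬ φ.Eval E v
  | _, .and φ ψ, v => φ.Eval E v ∧ ψ.Eval E v
  | _, .or φ ψ, v => φ.Eval E v ∨ ψ.Eval E v
  | _, .bexMem i φ, v => ∃ x, E x (v i) ∧ φ.Eval E (Fin.snoc v x)
  | _, .ballMem i φ, v => ∀ x, E x (v i) → φ.Eval E (Fin.snoc v x)
  | _, .bexSub i φ, v => ∃ x, SubE E x (v i) ∧ φ.Eval E (Fin.snoc v x)
  | _, .ballSub i φ, v => ∀ x, SubE E x (v i) → φ.Eval E (Fin.snoc v x)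
  | _, .ex φ, v => ∃ x, φ.Eval E (Fin.snoc v x)
  | _, .all φ, v => ∀ x, φ.Eval E (Fin.snoc v x)

/-- `Δ₀` formulas: only `∈`-bounded quantifiers. -/
def SF.IsDelta0 : {n : ℕ} → SF n → Prop
  | _, .mem _ _ => True
  | _, .eq _ _ => True
  | _, .not φ => φ.IsDelta0
  | _, .and φ ψ => φ.IsDelta0 ∧ ψ.IsDelta0
  | _, .or φ ψ => φ.IsDelta0 ∧ ψ.IsDelta0
  | _, .bexMem _ φ => φ.IsDelta0
  | _, .ballMem _ φ => φ.IsDelta0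
  | _, .bexSub _ _ => False
  | _, .ballSub _ _ => False
  | _, .ex _ => False
  | _, .all _ => False

/-- Takahashi's class `Δ₀^𝒫`: only `∈`-bounded and `⊆`-bounded quantifiers. -/
def SF.IsDelta0P : {n : ℕ} → SF n → Prop
  | _, .mem _ _ => True
  | _, .eq _ _ => True
  | _, .not φ => φ.IsDelta0P
  | _, .and φ ψ => φ.IsDelta0P ∧ ψ.IsDelta0P
  | _, .or φ ψ => φ.IsDelta0P ∧ ψ.IsDelta0P
  | _, .bexMem _ φ => φ.IsDelta0P
  | _, .ballMem _ φ => φ.IsDelta0P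
  | _, .bexSub _ φ => φ.IsDelta0P
  | _, .ballSub _ φ => φ.IsDelta0P
  | _, .ex _ => False
  | _, .all _ => False

def Delta0C : ∀ n, SF n → Prop := fun _ φ => φ.IsDelta0
def Delta0PC : ∀ n, SF n → Prop := fun _ φ => φ.IsDelta0P
def Sigma1C : ∀ n, SF n → Prop := fun _ φ => ∃ ψ, ψ.IsDelta0 ∧ φ = SF.ex ψ
def Pi1C : ∀ n, SF n → Prop := fun _ φ => ∃ ψ, ψ.IsDelta0 ∧ φ = SF.all ψ
def Sigma1PC : ∀ n, SF n → Prop := fun _ φ => ∃ ψ, ψ.IsDelta0P ∧ φ = SF.ex ψ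
def Pi1PC : ∀ n, SF n → Prop := fun _ φ => ∃ ψ, ψ.IsDelta0P ∧ φ = SF.all ψ
def FullC : ∀ n, SF n → Prop := fun _ _ => True

/-- A Gödel numbering of formulas. -/
def SF.encode : {n : ℕ} → SF n → ℕ
  | _, .mem i j => Nat.pair 0 (Nat.pair i.val j.val)
  | _, .eq i j => Nat.pair 1 (Nat.pair i.val j.val)
  | _, .not φ => Nat.pair 2 φ.encode
  | _, .and φ ψ => Nat.pair 3 (Nat.pair φ.encode ψ.encode)
  | _, .or φ ψ => Nat.pair 4 (Nat.pair φ.encode ψ.encode)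
  | _, .bexMem i φ => Nat.pair 5 (Nat.pair i.val φ.encode)
  | _, .ballMem i φ => Nat.pair 6 (Nat.pair i.val φ.encode)
  | _, .bexSub i φ => Nat.pair 7 (Nat.pair i.val φ.encode)
  | _, .ballSub i φ => Nat.pair 8 (Nat.pair i.val φ.encode)
  | _, .ex φ => Nat.pair 9 φ.encode
  | _, .all φ => Nat.pair 10 φ.encode

/-- A theory (set of sentences) is recursively enumerable if the set of Gödel
numbers of its members is the domain of a partial recursive function. -/
def REset (S : Set (SF 0)) : Prop :=
  ∃ f : ℕ →. ℕ, Nat.Partrec f ∧ ∀ φ : SF 0, φ ∈ S ↔ SF.encode φ ∈ f.Dom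

/-- `⟨X, E⟩ ⊨ S` for a set `S` of sentences. -/
def SatT (E : X → X → Prop) (S : Set (SF 0)) : Prop :=
  ∀ φ ∈ S, SF.Eval E φ (fun i => i.elim0)

/-! ## Axioms and axiom schemes -/

def ExtensionalityAx (E : X → X → Prop) : Prop := ∀ a b, (∀ z, E z a ↔ E z b) → a = b
def EmptySetAx (E : X → X → Prop) : Prop := ∃ a, ∀ z, ¬ E z a
def PairAx (E : X → X → Prop) : Prop := ∀ x y, ∃ a, ∀ z, E z a ↔ (z = x ∨ z = y)
def UnionAx (E : X → X → Prop) : Prop := ∀ a, ∃ b, ∀ z, E z b ↔ ∃ y, E y a ∧ E z y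
def SetDiffAx (E : X → X → Prop) : Prop := ∀ a b, ∃ c, ∀ z, E z c ↔ (E z a ∧ ¬ E z b)
def PowerAx (E : X → X → Prop) : Prop := ∀ a, ∃ p, ∀ z, E z p ↔ SubE E z a
def TransSet (E : X → X → Prop) (t : X) : Prop := ∀ y, E y t → ∀ z, E z y → E z t
def TCoAx (E : X → X → Prop) : Prop := ∀ a, ∃ t, TransSet E t ∧ SubE E a t
def SuccOf (E : X → X → Prop) (x s : X) : Prop := ∀ z, E z s ↔ (E z x ∨ z = x)
def InductiveSet (E : X → X → Prop) (a : X) : Prop :=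
  (∃ e, E e a ∧ ∀ z, ¬ E z e) ∧ ∀ x, E x a → ∃ s, E s a ∧ SuccOf E x s
def InfinityAx (E : X → X → Prop) : Prop := ∃ a, InductiveSet E a
def SetFoundationAx (E : X → X → Prop) : Prop :=
  ∀ z, (∃ x, E x z) → ∃ y, E y z ∧ ∀ x, E x y → ¬ E x z
/-- The axiom of choice: every set of pairwise disjoint nonempty sets has a transversal. -/
def ACAx (E : X → X → Prop) : Prop :=
  ∀ a, (∀ x, E x a → ∃ z, E z x) →
    (∀ x y, E x a → E y a → x ≠ y → ∀ z, E z x → ¬ E z y) →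
    ∃ c, ∀ x, E x a → ∃! z, E z c ∧ E z x

def SeparationScheme (E : X → X → Prop) (C : ∀ n, SF n → Prop) : Prop :=
  ∀ (n : ℕ) (φ : SF (n + 1)), C _ φ → ∀ (p : Fin n → X) (w : X),
    ∃ y, ∀ x, E x y ↔ (E x w ∧ φ.Eval E (Fin.snoc p x))

def CollectionScheme (E : X → X → Prop) (C : ∀ n, SF n → Prop) : Prop :=
  ∀ (n : ℕ) (φ : SF (n + 2)), C _ φ → ∀ (p : Fin n → X) (w : X),
    (∀ x, E x w → ∃ y, φ.Eval E (Fin.snoc (Fin.snoc p x) y)) →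
    ∃ c, ∀ x, E x w → ∃ y, E y c ∧ φ.Eval E (Fin.snoc (Fin.snoc p x) y)

def FoundationScheme (E : X → X → Prop) (C : ∀ n, SF n → Prop) : Prop :=
  ∀ (n : ℕ) (φ : SF (n + 1)), C _ φ → ∀ p : Fin n → X,
    (∃ x, φ.Eval E (Fin.snoc p x)) →
    ∃ y, φ.Eval E (Fin.snoc p y) ∧ ∀ x, E x y → ¬ φ.Eval E (Fin.snoc p x)

/-! ## Theories -/

def ModelMminus (E : X → X → Prop) : Prop :=
  ExtensionalityAx E ∧ EmptySetAx E ∧ PairAx E ∧ UnionAx E ∧ SetDiffAx E ∧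
    TCoAx E ∧ InfinityAx E ∧ SeparationScheme E Delta0C ∧ SetFoundationAx E

def ModelM (E : X → X → Prop) : Prop := ModelMminus E ∧ PowerAx E

def ModelKP (E : X → X → Prop) : Prop :=
  ExtensionalityAx E ∧ PairAx E ∧ UnionAx E ∧ SeparationScheme E Delta0C ∧
    CollectionScheme E Delta0C ∧ FoundationScheme E Pi1C

def ModelKPP (E : X → X → Prop) : Prop :=
  ModelM E ∧ CollectionScheme E Delta0PC ∧ FoundationScheme E Pi1PC

def ModelMOST (E : X → X → Prop) : Prop :=
  ModelM E ∧ SeparationScheme E Sigma1C ∧ ACAx E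

def ModelZF (E : X → X → Prop) : Prop :=
  ExtensionalityAx E ∧ EmptySetAx E ∧ PairAx E ∧ UnionAx E ∧ PowerAx E ∧
    InfinityAx E ∧ SeparationScheme E FullC ∧ CollectionScheme E FullC ∧
    FoundationScheme E FullC

/-! ## Internal set-theoretic machinery -/

/-- `p = {{x}, {x, y}}` (Kuratowski pair). -/
def IsPair (E : X → X → Prop) (p x y : X) : Prop :=
  ∀ z, E z p ↔ ((∀ w, E w z ↔ w = x) ∨ (∀ w, E w z ↔ (w = x ∨ w = y)))

def FunApp (E : X → X → Prop) (f x y : X) : Prop := ∃ q, E q f ∧ IsPair E q x y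

/-- `f` is a function with domain `d`. -/
def IsFuncOn (E : X → X → Prop) (f d : X) : Prop :=
  (∀ q, E q f → ∃ x y, IsPair E q x y ∧ E x d) ∧
  (∀ x y y', FunApp E f x y → FunApp E f x y' → y = y') ∧
  (∀ x, E x d → ∃ y, FunApp E f x y)

/-- `f` is an injective function from `dom` into `cod`. -/
def InjFunInto (E : X → X → Prop) (f dom cod : X) : Prop :=
  IsFuncOn E f dom ∧ (∀ x y, FunApp E f x y → E y cod) ∧
  (∀ x x' y, FunApp E f x y → FunApp E f x' y → x = x')

/-- `|t| ≤ |κ|`. -/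
def CardLe (E : X → X → Prop) (t κ : X) : Prop := ∃ f, InjFunInto E f t κ

def IsOrdinal (E : X → X → Prop) (x : X) : Prop :=
  TransSet E x ∧ ∀ y, E y x → TransSet E y

/-- An (initial ordinal =) cardinal: an ordinal that does not inject into any of
its members. -/
def IsCardinal (E : X → X → Prop) (κ : X) : Prop :=
  IsOrdinal E κ ∧ ∀ β, E β κ → ¬ CardLe E κ β

/-- `t` is the transitive closure of the set `x`. -/
def IsTCset (E : X → X → Prop) (t x : X) : Prop :=
  TransSet E t ∧ SubE E x t ∧ ∀ u, TransSet E u → SubE E x u → SubE E t u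

/-- `t` is the transitive closure of `{x}`. -/
def IsTCsingleton (E : X → X → Prop) (t x : X) : Prop :=
  TransSet E t ∧ E x t ∧ ∀ u, TransSet E u → E x u → SubE E t u

def IsOmega (E : X → X → Prop) (w : X) : Prop :=
  InductiveSet E w ∧ ∀ a, InductiveSet E a → SubE E w a

/-- `⟨X, E⟩` is `ω`-standard: its internal natural numbers are order-isomorphic
to the standard natural numbers. -/
def OmegaStandard (E : X → X → Prop) : Prop :=
  ∀ w, IsOmega E w → ∃ f : ℕ → X, (∀ n, E (f n) w) ∧ (∀ x, E x w → ∃ n, x = f n) ∧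
    ∀ m n : ℕ, (E (f m) (f n) ↔ m < n)

/-- `f` is (a function coding) the cumulative hierarchy `β ↦ V_β` for `β ∈ α`,
using `V_β = ⋃_{γ∈β} 𝒫(V_γ)`. -/
def IsRK (E : X → X → Prop) (α f : X) : Prop :=
  IsOrdinal E α ∧ IsFuncOn E f α ∧
  ∀ β vβ, E β α → FunApp E f β vβ →
    ∀ x, E x vβ ↔ ∃ γ, E γ β ∧ ∃ vγ, FunApp E f γ vγ ∧ SubE E x vγ

/-- Internal rank comparison `ρ(x) ≤ ρ(y)`: `x` belongs to every stage of the
cumulative hierarchy that `y` belongs to. -/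
def RankLe (E : X → X → Prop) (x y : X) : Prop :=
  ∀ α f β v, IsRK E α f → E β α → FunApp E f β v → E y v → E x v

/-- External `n`-th von Neumann natural number. -/
def IsVN (E : X → X → Prop) : ℕ → X → Prop
  | 0, x => ∀ z, ¬ E z x
  | (n + 1), x => ∃ y, IsVN E n y ∧ SuccOf E y x

/-- `a` is the `n`-th infinite cardinal `ℵ_n` (for external `n`, as computed in
the model): `ℵ₀ = ω`, and `ℵ_{n+1}` is the least cardinal above `ℵ_n`. -/
def IsAleph (E : X → X → Prop) : ℕ → X → Prop
  | 0, a => IsOmega E a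
  | (n + 1), a => ∃ b, IsAleph E n b ∧ IsCardinal E a ∧ E b a ∧
      ∀ c, IsCardinal E c → E b c → (c = a ∨ E a c)

/-- `a` is the cardinal `ℵ_ω` of the model: the least limit cardinal above `ω`. -/
def IsAlephOmega (E : X → X → Prop) (a : X) : Prop :=
  (IsCardinal E a ∧ (∃ w, IsOmega E w ∧ E w a) ∧
    (∀ β, E β a → ∃ μ, IsCardinal E μ ∧ E β μ ∧ E μ a)) ∧
  ∀ a', (IsCardinal E a' ∧ (∃ w, IsOmega E w ∧ E w a') ∧
    (∀ β, E β a' → ∃ μ, IsCardinal E μ ∧ E β μ ∧ E μ a')) → (a = a' ∨ E a a')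

/-! ## Internal satisfaction and the constructible hierarchy (for `V = L`) -/

/-- `c = ⟨n, a⟩` with the tag `n` an external natural (internally coded). -/
def TaggedBy (E : X → X → Prop) (c : X) (n : ℕ) (a : X) : Prop :=
  ∃ t, IsVN E n t ∧ IsPair E c t a

def CodeMem (E : X → X → Prop) (c i j : X) : Prop := ∃ p, IsPair E p i j ∧ TaggedBy E c 0 p
def CodeEq (E : X → X → Prop) (c i j : X) : Prop := ∃ p, IsPair E p i j ∧ TaggedBy E c 1 p
def CodeNot (E : X → X → Prop) (c' c : X) : Prop := TaggedBy E c' 2 c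
def CodeAnd (E : X → X → Prop) (c' c₁ c₂ : X) : Prop := ∃ p, IsPair E p c₁ c₂ ∧ TaggedBy E c' 3 p
def CodeEx (E : X → X → Prop) (c' i c : X) : Prop := ∃ p, IsPair E p i c ∧ TaggedBy E c' 4 p

/-- `d` is closed under the internal formation rules for codes of formulas with
variables indexed by elements of `w` (the internal `ω`). -/
def ClosedCode (E : X → X → Prop) (w d : X) : Prop :=
  (∀ i j c, E i w → E j w → CodeMem E c i j → E c d) ∧
  (∀ i j c, E i w → E j w → CodeEq E c i j → E c d) ∧
  (∀ c c', E c d → CodeNot E c' c → E c' d) ∧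
  (∀ c₁ c₂ c', E c₁ d → E c₂ d → CodeAnd E c' c₁ c₂ → E c' d) ∧
  (∀ i c c', E i w → E c d → CodeEx E c' i c → E c' d)

/-- `c` is an internal code of a first-order formula of the language of set theory. -/
def FormCode (E : X → X → Prop) (w c : X) : Prop := ∀ d, ClosedCode E w d → E c d

/-- An internal assignment of elements of `a` to the variables. -/
def IsAssign (E : X → X → Prop) (w a v : X) : Prop :=
  IsFuncOn E v w ∧ ∀ i y, FunApp E v i y → E y a

/-- `v' = v[i ↦ x]`. -/
def UpdateAssign (E : X → X → Prop) (w v : X) (i x v' : X) : Prop :=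
  FunApp E v' i x ∧ ∀ j, E j w → j ≠ i → ∀ y, (FunApp E v j y ↔ FunApp E v' j y)

def PairIn (E : X → X → Prop) (s c v : X) : Prop := ∃ q, E q s ∧ IsPair E q c v

/-- `s` is a (full) satisfaction class for the set structure `⟨a, E⟩`: a set of
pairs ⟨code, assignment⟩ obeying the Tarski conditions. -/
def SatSet (E : X → X → Prop) (w a s : X) : Prop :=
  (∀ q, E q s → ∃ c v, IsPair E q c v ∧ FormCode E w c ∧ IsAssign E w a v) ∧
  (∀ i j c v xi xj, E i w → E j w → CodeMem E c i j → IsAssign E w a v →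
    FunApp E v i xi → FunApp E v j xj → (PairIn E s c v ↔ E xi xj)) ∧
  (∀ i j c v xi xj, E i w → E j w → CodeEq E c i j → IsAssign E w a v →
    FunApp E v i xi → FunApp E v j xj → (PairIn E s c v ↔ xi = xj)) ∧
  (∀ c c' v, FormCode E w c → CodeNot E c' c → IsAssign E w a v →
    (PairIn E s c' v ↔ ¬ PairIn E s c v)) ∧
  (∀ c₁ c₂ c' v, FormCode E w c₁ → FormCode E w c₂ → CodeAnd E c' c₁ c₂ →
    IsAssign E w a v → (PairIn E s c' v ↔ (PairIn E s c₁ v ∧ PairIn E s c₂ v))) ∧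
  (∀ i c c' v, E i w → FormCode E w c → CodeEx E c' i c → IsAssign E w a v →
    (PairIn E s c' v ↔ ∃ x v', E x a ∧ IsAssign E w a v' ∧ UpdateAssign E w v i x v' ∧
      PairIn E s c v'))

/-- `b` is a subset of `a` definable over `⟨a, E⟩` (with parameters from `a`). -/
def DefSub (E : X → X → Prop) (w a s b : X) : Prop :=
  SubE E b a ∧ ∃ c, FormCode E w c ∧ ∃ v, IsAssign E w a v ∧ ∃ i, E i w ∧
    ∀ x, E x b ↔ (E x a ∧ ∃ v', IsAssign E w a v' ∧ UpdateAssign E w v i x v' ∧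
      PairIn E s c v')

/-- `f` codes the constructible hierarchy `β ↦ L_β` for `β ∈ α`, using
`L_β = ⋃_{γ∈β} Def(L_γ)`. -/
def IsLHier (E : X → X → Prop) (w f α : X) : Prop :=
  IsOrdinal E α ∧ IsFuncOn E f α ∧
  ∀ β vβ, E β α → FunApp E f β vβ →
    ∀ x, E x vβ ↔ ∃ γ, E γ β ∧ ∃ vγ, FunApp E f γ vγ ∧ ∃ s, SatSet E w vγ s ∧
      DefSub E w vγ s x

/-- The axiom `V = L`: every set belongs to some level of the constructible hierarchy. -/
def VeqL (E : X → X → Prop) : Prop :=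
  ∀ w, IsOmega E w → ∀ x, ∃ α f β vβ, IsLHier E w f α ∧ E β α ∧ FunApp E f β vβ ∧ E x vβ

/-! ## Extensions -/

/-- The substructure of `⟨X, E⟩` with underlying set `A`. -/
def restrict (E : X → X → Prop) (A : Set X) : A → A → Prop := fun a b => E a.1 b.1

/-- `B` is an end extension of `A` (both substructures of an ambient `⟨X, E⟩`). -/
def EndExtIn (E : X → X → Prop) (A B : Set X) : Prop :=
  A ⊆ B ∧ ∀ x y, x ∈ B → y ∈ A → E x y → x ∈ A

/-- `B` is a powerset-preserving end extension of `A` (within an ambient `⟨X, E⟩`);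
`x ⊆ y` is computed in `B`. -/
def PowExtIn (E : X → X → Prop) (A B : Set X) : Prop :=
  EndExtIn E A B ∧ ∀ x y, x ∈ B → y ∈ A → (∀ z, z ∈ B → E z x → E z y) → x ∈ A

/-- The whole structure `⟨X, E⟩` is an end extension of its substructure on `A`. -/
def EndExtSet (E : X → X → Prop) (A : Set X) : Prop :=
  ∀ x y, y ∈ A → E x y → x ∈ A

/-- `⟨X, E⟩` is a powerset-preserving end extension of its substructure on `A`. -/
def PowExtSet (E : X → X → Prop) (A : Set X) : Prop :=
  EndExtSet E A ∧ ∀ x y, y ∈ A → SubE E x y → x ∈ A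

/-- `⟨X, E⟩` is a rank extension of its substructure on `A`. -/
def RankExtSet (E : X → X → Prop) (A : Set X) : Prop :=
  PowExtSet E A ∧ ∀ x y, y ∈ A → RankLe E x y → x ∈ A

/-- The extension `⟨X, E⟩` of its substructure on `A` is proper and topless. -/
def ToplessSet (E : X → X → Prop) (A : Set X) : Prop :=
  A ≠ Set.univ ∧ ∀ c, (∀ x, E x c → x ∈ A) → c ∈ A

/-- The extension `⟨X, E⟩` of its substructure on `A` is proper and blunt (not topless). -/
def BluntSet (E : X → X → Prop) (A : Set X) : Prop :=
  A ≠ Set.univ ∧ ¬ ToplessSet E A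

/-! ## Weak dependent choice -/

/-- `δ_ω^φ(b, f, p)`: `f` is a function on `ω` with `f(0) = {b}` tracing the
`φ`-successor relation. -/
def IsWDCWitness (E : X → X → Prop) {n : ℕ} (φ : SF (n + 2)) (p : Fin n → X)
    (w b f : X) : Prop :=
  IsFuncOn E f w ∧
  (∃ z v, (∀ u, ¬ E u z) ∧ E z w ∧ FunApp E f z v ∧ ∀ t, E t v ↔ t = b) ∧
  ∀ m m' vm vm', E m w → SuccOf E m m' → E m' w → FunApp E f m vm → FunApp E f m' vm' →
    ((∀ x, E x vm → ∃ y, E y vm' ∧ φ.Eval E (Fin.snoc (Fin.snoc p x) y)) ∧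
     (∀ y, E y vm' → ∀ x, E x vm → φ.Eval E (Fin.snoc (Fin.snoc p x) y)))

/-- The scheme `Δ₀^𝒫-WDC_ω`. -/
def WDComega (E : X → X → Prop) : Prop :=
  ∀ (n : ℕ) (φ : SF (n + 2)), Delta0PC _ φ → ∀ p : Fin n → X,
    (∀ x, ∃ y, φ.Eval E (Fin.snoc (Fin.snoc p x) y)) →
    ∀ w, IsOmega E w → ∀ b, ∃ f, IsWDCWitness E φ p w b f

/-! ## Internal well-founded extensional relations (for `H_{≤κ}`) -/

def RRel (E : X → X → Prop) (R a b : X) : Prop := ∃ p, E p R ∧ IsPair E p a b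

def RelOn (E : X → X → Prop) (R k : X) : Prop :=
  ∀ p, E p R → ∃ a b, IsPair E p a b ∧ E a k ∧ E b k

/-- `BFEXT(R, k)`: `R ⊆ k × k` is extensional on `k`, has a top element, and every
nonempty subset of `k` has an `R`-minimal element. -/
def BFEXT (E : X → X → Prop) (R k : X) : Prop :=
  RelOn E R k ∧
  (∀ a b, E a k → E b k → (∀ c, E c k → (RRel E R c a ↔ RRel E R c b)) → a = b) ∧
  (∃ t, E t k ∧ ∀ b, E b k → b ≠ t → RRel E R b t) ∧
  (∀ S, SubE E S k → (∃ z, E z S) → ∃ m, E m S ∧ ∀ y, E y S → ¬ RRel E R y m)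

/-- `f` is an isomorphism of `⟨k, R⟩` with `⟨T, ∈⟩`. -/
def IsoOnto (E : X → X → Prop) (R k f T : X) : Prop :=
  IsFuncOn E f k ∧ (∀ x y, FunApp E f x y → E y T) ∧
  (∀ y, E y T → ∃ x, E x k ∧ FunApp E f x y) ∧
  (∀ x x' y, FunApp E f x y → FunApp E f x' y → x = x') ∧
  ∀ a b ya yb, E a k → E b k → FunApp E f a ya → FunApp E f b yb →
    (RRel E R a b ↔ E ya yb)

/-- The predicate `Xv = H_{≤κ} = {x : |TC(x)| ≤ κ}`. -/
def HleqPred (E : X → X → Prop) (Xv κ : X) : Prop :=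
  IsCardinal E κ ∧ ∀ x, E x Xv ↔ ∃ t, IsTCset E t x ∧ CardLe E t κ

/-- The explicit conjunction (i) ∧ (ii) ∧ (iii) asserting `Xv = H_{≤κ}`. -/
def ExplicitH (E : X → X → Prop) (Xv κ : X) : Prop :=
  IsCardinal E κ ∧
  (∀ R, BFEXT E R κ → ∃ x f T, E x Xv ∧ E f Xv ∧ E T Xv ∧ IsTCsingleton E T x ∧
    IsoOnto E R κ f T) ∧
  (∀ x, E x Xv → ∃ T f, E T Xv ∧ E f Xv ∧ IsTCsingleton E T x ∧ InjFunInto E f T κ)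

/-!
The route to a dependent choice sequence is the stratification of the universe into stages
`H_{≤α}`, the sets whose elements lie in a transitive set enumerated along the ordinal `α`.
A `Δ₀^𝒫` relation is `Δ₂`, because the power set operation is `Π₁`. `Π₁`-Collection closes the
`Σ₂` predicates under bounded quantification and yields `Σ₂`-Replacement, `Δ₂`-Separation and
`Δ₂`-Foundation. Choice puts every set into some stage, and coding transitive sets by relations
on `α` shows that each stage is a set. For a total `Δ₂` relation `P`, sending `A` to the first
stage that contains a `P`-successor of each element of `A` is therefore a `Σ₂` function. Its
iterates along `ω` exist by `Σ₂` recursion; here `ω`-standardness supplies the induction, which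
the model does not prove for `Σ₂` predicates. The union `H` of the iterates is closed under
`P`-successors, so a choice function for `H` picks a dependent choice sequence `aₙ`, and the
witness is `n ↦ {aₙ}`.
-/

/-! ## Definability with parameters -/

/-- A type `D` of tuples over `X`: its coordinates play the role of the free variables of a
predicate on `D`. -/
class VarContext (X D : Type u) where
  Coord : Type
  coord : Coord → D → X

namespace VarContext

instance self : VarContext X X := ⟨Unit, fun _ x => x⟩

instance prod {D D' : Type u} [VarContext X D] [VarContext X D'] : VarContext X (D × D') :=
  ⟨Coord X D ⊕ Coord X D', Sum.elim (fun i d => coord i d.1) fun i d => coord i d.2⟩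

instance tuple {n : ℕ} : VarContext X (Fin n → X) := ⟨Fin n, fun i v => v i⟩

end VarContext

open VarContext

/-- A map of contexts each of whose output coordinates is constant or an input coordinate.  The
maps `D → X` of this kind are the terms (variables and parameters) in context `D`. -/
class CoordMap (X : Type u) {D D' : Type u} [VarContext X D] [VarContext X D'] (g : D → D') :
    Prop where
  coord_eq : ∀ i : Coord X D',
    (∃ c : X, ∀ d, coord i (g d) = c) ∨ ∃ j : Coord X D, ∀ d, coord i (g d) = coord j d

namespace CoordMap

variable {D D' D'' : Type u} [VarContext X D] [VarContext X D'] [VarContext X D'']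

theorem comp {f : D' → D''} {g : D → D'} (hf : CoordMap X f) (hg : CoordMap X g) :
    CoordMap X fun d => f (g d) where
  coord_eq i := by
    rcases hf.coord_eq i with ⟨c, hc⟩ | ⟨j, hj⟩
    · exact .inl ⟨c, fun d => hc (g d)⟩
    · simpa only [hj] using hg.coord_eq j

theorem pi {n : ℕ} {g : D → Fin n → X} (hg : ∀ i, CoordMap X fun d => g d i) : CoordMap X g :=
  ⟨fun i => (hg i).coord_eq ()⟩

instance (priority := low) prod {f : D → D'} {g : D → D''} [hf : CoordMap X f]
    [hg : CoordMap X g] : CoordMap X fun d => (f d, g d) :=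
  ⟨Sum.rec hf.coord_eq hg.coord_eq⟩

instance fst {g : D → D' × D''} [hg : CoordMap X g] : CoordMap X fun d => (g d).1 :=
  ⟨fun i => hg.coord_eq (.inl i)⟩

instance snd {g : D → D' × D''} [hg : CoordMap X g] : CoordMap X fun d => (g d).2 :=
  ⟨fun i => hg.coord_eq (.inr i)⟩

instance apply {n : ℕ} {g : D → Fin n → X} [hg : CoordMap X g] (i : Fin n) :
    CoordMap X fun d => g d i :=
  ⟨fun _ => hg.coord_eq i⟩

instance snoc {n : ℕ} {g : D → Fin n → X} {t : D → X} [CoordMap X g] [CoordMap X t] :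
    CoordMap X fun d => (Fin.snoc (g d) (t d) : Fin (n + 1) → X) :=
  pi <| Fin.lastCases (by simpa) fun i => by simpa using apply i

instance append {m n : ℕ} {f : D → Fin m → X} {g : D → Fin n → X} [CoordMap X f] [CoordMap X g] :
    CoordMap X fun d => Fin.append (f d) (g d) :=
  pi <| Fin.addCases (fun i => by simpa using apply i) fun i => by simpa using apply i

instance const (c : D') : CoordMap X fun _ : D => c :=
  ⟨fun i => .inl ⟨coord i c, fun _ => rfl⟩⟩

instance id : CoordMap X fun d : D => d := ⟨fun i => .inr ⟨i, fun _ => rfl⟩⟩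

theorem eq_snd_or_independent {t : D × X → X} (ht : CoordMap X t) :
    (∀ q, t q = q.2) ∨ ∀ d x y, t (d, x) = t (d, y) := by
  rcases ht.coord_eq () with ⟨c, hc⟩ | ⟨j | _, hj⟩
  · exact .inr fun d x y => (hc _).trans (hc _).symm
  · exact .inr fun d x y => (hj (d, x)).trans (hj (d, y)).symm
  · exact .inl hj

end CoordMap

namespace SF

/-- Extension of a renaming of variables under a quantifier. -/
def liftRename {n m : ℕ} (ρ : Fin n → Fin m) : Fin (n + 1) → Fin (m + 1) :=
  Fin.lastCases (Fin.last m) fun i => (ρ i).castSucc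

/-- Renaming of free variables. -/
def rename : {n m : ℕ} → (Fin n → Fin m) → SF n → SF m
  | _, _, ρ, .mem i j => .mem (ρ i) (ρ j)
  | _, _, ρ, .eq i j => .eq (ρ i) (ρ j)
  | _, _, ρ, .not φ => .not (φ.rename ρ)
  | _, _, ρ, .and φ ψ => .and (φ.rename ρ) (ψ.rename ρ)
  | _, _, ρ, .or φ ψ => .or (φ.rename ρ) (ψ.rename ρ)
  | _, _, ρ, .bexMem i φ => .bexMem (ρ i) (φ.rename (liftRename ρ))
  | _, _, ρ, .ballMem i φ => .ballMem (ρ i) (φ.rename (liftRename ρ))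
  | _, _, ρ, .bexSub i φ => .bexSub (ρ i) (φ.rename (liftRename ρ))
  | _, _, ρ, .ballSub i φ => .ballSub (ρ i) (φ.rename (liftRename ρ))
  | _, _, ρ, .ex φ => .ex (φ.rename (liftRename ρ))
  | _, _, ρ, .all φ => .all (φ.rename (liftRename ρ))

theorem snoc_comp_liftRename {n m : ℕ} (ρ : Fin n → Fin m) (v : Fin m → X) (x : X) :
    (Fin.snoc v x : Fin (m + 1) → X) ∘ liftRename ρ = Fin.snoc (v ∘ ρ) x := by
  funext i
  refine Fin.lastCases ?_ (fun i => ?_) i <;> simp [liftRename]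

theorem eval_rename {E : X → X → Prop} {n m : ℕ} (φ : SF n) (ρ : Fin n → Fin m)
    (v : Fin m → X) : (φ.rename ρ).Eval E v ↔ φ.Eval E (v ∘ ρ) := by
  induction φ generalizing m <;>
    simp only [rename, Eval, Function.comp_apply, snoc_comp_liftRename, *]

theorem IsDelta0.rename {n m : ℕ} {φ : SF n} (hφ : φ.IsDelta0) (ρ : Fin n → Fin m) :
    (φ.rename ρ).IsDelta0 := by
  induction φ generalizing m <;> simp_all [SF.rename, IsDelta0]

end SF

/-- The predicate `P` is defined by a `Δ₀` formula with parameters. -/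
class Delta0Def (E : X → X → Prop) {D : Type u} [VarContext X D] (P : D → Prop) : Prop where
  exists_formula : ∃ (m : ℕ) (φ : SF m) (g : D → Fin m → X),
    φ.IsDelta0 ∧ CoordMap X g ∧ ∀ d, P d ↔ φ.Eval E (g d)

namespace Delta0Def

variable {E : X → X → Prop} {D D' : Type u} [VarContext X D] [VarContext X D']

theorem congr {P Q : D → Prop} (hP : Delta0Def E P) (h : ∀ d, Q d ↔ P d) : Delta0Def E Q :=
  (funext fun d => propext (h d) : Q = P) ▸ hP

theorem comp {P : D' → Prop} {g : D → D'} (hP : Delta0Def E P) (hg : CoordMap X g) :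
    Delta0Def E fun d => P (g d) := by
  obtain ⟨m, φ, f, hφ, hf, hP⟩ := hP
  exact ⟨m, φ, fun d => f (g d), hφ, hf.comp hg, fun d => hP (g d)⟩

instance mem {s t : D → X} [hs : CoordMap X s] [ht : CoordMap X t] :
    Delta0Def E fun d => E (s d) (t d) :=
  ⟨2, .mem 0 1, fun d => ![s d, t d], trivial, .pi (Fin.forall_fin_two.2 ⟨hs, ht⟩),
    fun _ => Iff.rfl⟩

instance eq {s t : D → X} [hs : CoordMap X s] [ht : CoordMap X t] :
    Delta0Def E fun d => s d = t d :=
  ⟨2, .eq 0 1, fun d => ![s d, t d], trivial, .pi (Fin.forall_fin_two.2 ⟨hs, ht⟩),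
    fun _ => Iff.rfl⟩

instance not {P : D → Prop} [hP : Delta0Def E P] : Delta0Def E fun d => ¬ P d := by
  obtain ⟨m, φ, g, hφ, hg, hP⟩ := hP
  exact ⟨m, .not φ, g, hφ, hg, fun d => not_congr (hP d)⟩

instance and {P Q : D → Prop} [hP : Delta0Def E P] [hQ : Delta0Def E Q] :
    Delta0Def E fun d => P d ∧ Q d := by
  obtain ⟨m, φ, g, hφ, hg, hP⟩ := hP
  obtain ⟨n, ψ, h, hψ, hh, hQ⟩ := hQ
  refine ⟨m + n, .and (φ.rename (Fin.castAdd n)) (ψ.rename (Fin.natAdd m)),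
    fun d => Fin.append (g d) (h d), ⟨hφ.rename _, hψ.rename _⟩,
    inferInstance, fun d => ?_⟩
  simp only [SF.Eval, SF.eval_rename, hP, hQ, Function.comp_def, Fin.append_left,
    Fin.append_right]

instance or {P Q : D → Prop} [Delta0Def E P] [Delta0Def E Q] :
    Delta0Def E fun d => P d ∨ Q d :=
  (inferInstance : Delta0Def E fun d => ¬ (¬ P d ∧ ¬ Q d)).congr fun _ => by tauto

instance imp {P Q : D → Prop} [Delta0Def E P] [Delta0Def E Q] :
    Delta0Def E fun d => P d → Q d :=
  (inferInstance : Delta0Def E fun d => ¬ P d ∨ Q d).congr fun _ => imp_iff_not_or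

instance iff {P Q : D → Prop} [Delta0Def E P] [Delta0Def E Q] :
    Delta0Def E fun d => P d ↔ Q d :=
  (inferInstance : Delta0Def E fun d => (P d → Q d) ∧ (Q d → P d)).congr fun _ =>
    iff_iff_implies_and_implies

-- The bound variable is moved to the last place of the tuple of arguments of the formula; its old
-- places hold the bounding set, as a dummy.
instance bex {t : D → X} {Q : D → X → Prop} [ht : CoordMap X t]
    [hQ : Delta0Def E fun q : D × X => Q q.1 q.2] :
    Delta0Def E fun d => ∃ x, E x (t d) ∧ Q d x := by
  classical
  obtain ⟨m, φ, g, hφ, hg, hQ⟩ := hQ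
  have hg' (i : Fin m) := (CoordMap.apply i (hg := hg)).eq_snd_or_independent
  let ρ (i : Fin m) : Fin (m + 2) :=
    if ∀ q, g q i = q.2 then Fin.last (m + 1) else i.castSucc.castSucc
  have hρ (d : D) (x : X) : g (d, x) =
      (Fin.snoc (Fin.snoc (g (d, t d)) (t d) : Fin (m + 1) → X) x : Fin (m + 2) → X) ∘ ρ := by
    funext i
    by_cases hi : ∀ q, g q i = q.2
    · simp [ρ, hi]
    · simpa only [ρ, if_neg hi, Function.comp_apply, Fin.snoc_castSucc] using
        (hg' i).resolve_left hi d x (t d)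
  have : CoordMap X fun d => g (d, t d) := hg.comp inferInstance
  exact ⟨m + 1, .bexMem (Fin.last m) (φ.rename ρ), fun d => Fin.snoc (g (d, t d)) (t d),
    hφ.rename ρ, inferInstance, fun d => by simp [SF.Eval, SF.eval_rename, ← hρ, hQ (d, _)]⟩

instance ball {t : D → X} {Q : D → X → Prop} [CoordMap X t]
    [Delta0Def E fun q : D × X => Q q.1 q.2] :
    Delta0Def E fun d => ∀ x, E x (t d) → Q d x :=
  (inferInstance : Delta0Def E fun d => ¬ ∃ x, E x (t d) ∧ ¬ Q d x).congr fun _ => by push Not; rfl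

theorem exists_formula_append [hX : Nonempty X] {k : ℕ} {P : (Fin k → X) → Prop}
    (hP : Delta0Def E P) : ∃ (n : ℕ) (φ : SF (n + k)) (p : Fin n → X),
      φ.IsDelta0 ∧ ∀ v, φ.Eval E (Fin.append p v) ↔ P v := by
  obtain ⟨m, φ, g, hφ, hg, hP⟩ := hP
  let p : Fin m → X := g fun _ => hX.some
  have hgp (i : Fin m) : ∃ j : Fin (m + k), ∀ v, g v i = Fin.append p v j := by
    rcases hg.coord_eq i with ⟨c, hc⟩ | ⟨j, hj⟩
    · exact ⟨Fin.castAdd k i, fun v => by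
        rw [Fin.append_left]; exact (hc v).trans (hc _).symm⟩
    · exact ⟨Fin.natAdd m j, fun v => by rw [Fin.append_right]; exact hj v⟩
  choose ρ hρ using hgp
  refine ⟨m, φ.rename ρ, p, hφ.rename ρ, fun v => ?_⟩
  rw [SF.eval_rename, hP, show g v = Fin.append p v ∘ ρ from funext fun i => hρ i v]

instance (priority := low) comp₁ {P : X → Prop} {a : D → X} [hP : Delta0Def E P]
    [ha : CoordMap X a] : Delta0Def E fun d => P (a d) :=
  hP.comp ha

instance (priority := low) comp₂ {P : X → X → Prop} {a b : D → X}
    [hP : Delta0Def E fun q : X × X => P q.1 q.2] [CoordMap X a] [CoordMap X b] :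
    Delta0Def E fun d => P (a d) (b d) :=
  hP.comp (g := fun d => (a d, b d)) inferInstance

instance (priority := low) comp₃ {P : X → X → X → Prop} {a b c : D → X}
    [hP : Delta0Def E fun q : X × X × X => P q.1 q.2.1 q.2.2] [CoordMap X a] [CoordMap X b]
    [CoordMap X c] : Delta0Def E fun d => P (a d) (b d) (c d) :=
  hP.comp (g := fun d => (a d, b d, c d)) inferInstance

instance (priority := low) comp₄ {P : X → X → X → X → Prop} {a b c e : D → X}
    [hP : Delta0Def E fun q : X × X × X × X => P q.1 q.2.1 q.2.2.1 q.2.2.2] [CoordMap X a]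
    [CoordMap X b] [CoordMap X c] [CoordMap X e] :
    Delta0Def E fun d => P (a d) (b d) (c d) (e d) :=
  hP.comp (g := fun d => (a d, b d, c d, e d)) inferInstance

-- `fun x => P a x` is `P a`, which does not have the shape of the preceding instances.
instance (priority := low) of_uncurry {P : X → X → Prop} {a : X}
    [hP : Delta0Def E fun q : X × X => P q.1 q.2] : Delta0Def E (P a) :=
  hP.comp (.prod (f := fun _ => a) (g := fun x => x))

end Delta0Def

theorem append_pair {n : ℕ} (p : Fin n → X) (x y : X) :
    Fin.append p ![x, y] = Fin.snoc (Fin.snoc p x) y := by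
  rw [show ![x, y] = Fin.snoc ![x] y by ext i; fin_cases i <;> rfl, Fin.append_snoc,
    Fin.append_right_eq_snoc]
  rfl

theorem append_triple {n : ℕ} (p : Fin n → X) (x y z : X) :
    Fin.append p ![x, y, z] = Fin.snoc (Fin.snoc (Fin.snoc p x) y) z := by
  rw [show ![x, y, z] = Fin.snoc ![x, y] z by ext i; fin_cases i <;> rfl, Fin.append_snoc,
    append_pair]

/-- A class of predicates on contexts, such as the `Σₖ` predicates. -/
abbrev DefClass (X : Type u) := ∀ ⦃D : Type u⦄ [VarContext X D], (D → Prop) → Prop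

namespace DefClass

/-- The complements of the members of a class. -/
def dual (Γ : DefClass X) : DefClass X := fun _ _ P => Γ fun d => ¬ P d

/-- The projections `∃ y, Q (·, y)` of the members of a class. -/
def proj (Γ : DefClass X) : DefClass X := fun D _ P =>
  ∃ Q : D × X → Prop, Γ Q ∧ ∀ d, P d ↔ ∃ y, Q (d, y)

/-- The collection principle for the relations of a class. -/
def Collects (E : X → X → Prop) (Γ : DefClass X) : Prop :=
  ∀ Q : X × X → Prop, Γ Q → ∀ w, (∀ x, E x w → ∃ y, Q (x, y)) →
    ∃ c, ∀ x, E x w → ∃ y, E y c ∧ Q (x, y)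

/-- The class contains the `Δ₀` predicates and is closed under substitution of terms, conjunction,
disjunction and bounded quantification. -/
structure IsBoundedClosed (E : X → X → Prop) (Γ : DefClass X) : Prop where
  delta0 {D : Type u} [VarContext X D] {P : D → Prop} : Delta0Def E P → Γ P
  comp {D D' : Type u} [VarContext X D] [VarContext X D'] {P : D' → Prop} {g : D → D'} :
    Γ P → CoordMap X g → Γ fun d => P (g d)
  and {D : Type u} [VarContext X D] {P Q : D → Prop} : Γ P → Γ Q → Γ fun d => P d ∧ Q d
  or {D : Type u} [VarContext X D] {P Q : D → Prop} : Γ P → Γ Q → Γ fun d => P d ∨ Q d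
  bex {D : Type u} [VarContext X D] {t : D → X} {Q : D → X → Prop} :
    CoordMap X t → Γ (fun q : D × X => Q q.1 q.2) → Γ fun d => ∃ x, E x (t d) ∧ Q d x
  ball {D : Type u} [VarContext X D] {t : D → X} {Q : D → X → Prop} :
    CoordMap X t → Γ (fun q : D × X => Q q.1 q.2) → Γ fun d => ∀ x, E x (t d) → Q d x

variable {E : X → X → Prop} {Γ : DefClass X}

theorem isBoundedClosed_delta0Def : IsBoundedClosed E fun _ _ => Delta0Def E where
  delta0 h := h
  comp := .comp
  and _ _ := inferInstance
  or _ _ := inferInstance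
  bex _ _ := inferInstance
  ball _ _ := inferInstance

theorem IsBoundedClosed.dual (hΓ : IsBoundedClosed E Γ) : IsBoundedClosed E Γ.dual where
  delta0 _ := hΓ.delta0 inferInstance
  comp hP hg := hΓ.comp hP hg
  and hP hQ := by simpa only [DefClass.dual, not_and_or] using hΓ.or hP hQ
  or hP hQ := by simpa only [DefClass.dual, not_or] using hΓ.and hP hQ
  bex {_ _ _ Q} ht hQ := by
    simpa only [DefClass.dual, not_exists, not_and] using hΓ.ball (Q := fun d x => ¬ Q d x) ht hQ
  ball {_ _ _ Q} ht hQ := by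
    simpa only [DefClass.dual, not_forall, exists_prop] using
      hΓ.bex (Q := fun d x => ¬ Q d x) ht hQ

theorem IsBoundedClosed.le_proj [Nonempty X] (hΓ : IsBoundedClosed E Γ) {D : Type u}
    [VarContext X D] {P : D → Prop} (hP : Γ P) : Γ.proj P :=
  ⟨fun q => P q.1, hΓ.comp hP inferInstance, fun _ => (exists_const X).symm⟩

-- Two witnesses `x`, `y` are merged into one set `c` that contains both.
theorem exists_mem_mem_iff (hpair : PairAx E) {R : X → X → Prop} :
    (∃ c x, E x c ∧ ∃ y, E y c ∧ R x y) ↔ ∃ x y, R x y := by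
  refine ⟨fun ⟨_, x, _, y, _, h⟩ => ⟨x, y, h⟩, fun ⟨x, y, h⟩ => ?_⟩
  obtain ⟨c, hc⟩ := hpair x y
  exact ⟨c, x, (hc x).2 (.inl rfl), y, (hc y).2 (.inr rfl), h⟩

theorem IsBoundedClosed.bex_bex_mem (hΓ : IsBoundedClosed E Γ) {D : Type u} [VarContext X D]
    {R : (D × X) × X → Prop} (hR : Γ R) :
    Γ fun q : D × X => ∃ x, E x q.2 ∧ ∃ y, E y q.2 ∧ R ((q.1, x), y) :=
  hΓ.bex inferInstance <| hΓ.bex inferInstance <|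
    hΓ.comp (g := fun r : ((D × X) × X) × X => ((r.1.1.1, r.1.2), r.2)) hR inferInstance

theorem IsBoundedClosed.proj_exists (hΓ : IsBoundedClosed E Γ) (hpair : PairAx E) {D : Type u}
    [VarContext X D] {Q : D × X → Prop} (hQ : Γ.proj Q) : Γ.proj fun d => ∃ x, Q (d, x) := by
  obtain ⟨R, hR, hQR⟩ := hQ
  exact ⟨_, hΓ.bex_bex_mem hR, fun d => by simp only [hQR, exists_mem_mem_iff hpair]⟩

theorem IsBoundedClosed.proj_and (hΓ : IsBoundedClosed E Γ) (hpair : PairAx E) {D : Type u}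
    [VarContext X D] {P Q : D → Prop} (hP : Γ.proj P) (hQ : Γ.proj Q) :
    Γ.proj fun d => P d ∧ Q d := by
  obtain ⟨P', hP', hPP'⟩ := hP
  obtain ⟨Q', hQ', hQQ'⟩ := hQ
  have hR : Γ fun r : (D × X) × X => P' r.1 ∧ Q' (r.1.1, r.2) :=
    hΓ.and (hΓ.comp hP' inferInstance) (hΓ.comp hQ' inferInstance)
  refine ⟨_, hΓ.bex_bex_mem hR, fun d => ?_⟩
  simp only [hPP', hQQ', exists_mem_mem_iff hpair, exists_and_left, exists_and_right]

theorem IsBoundedClosed.proj_or (hΓ : IsBoundedClosed E Γ) {D : Type u} [VarContext X D]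
    {P Q : D → Prop} (hP : Γ.proj P) (hQ : Γ.proj Q) : Γ.proj fun d => P d ∨ Q d := by
  obtain ⟨P', hP', hPP'⟩ := hP
  obtain ⟨Q', hQ', hQQ'⟩ := hQ
  exact ⟨_, hΓ.or hP' hQ', fun d => by simp only [hPP', hQQ', exists_or]⟩

theorem IsBoundedClosed.proj_comp (hΓ : IsBoundedClosed E Γ) {D D' : Type u} [VarContext X D]
    [VarContext X D'] {P : D' → Prop} {g : D → D'} (hP : Γ.proj P) (hg : CoordMap X g) :
    Γ.proj fun d => P (g d) := by
  obtain ⟨Q, hQ, hPQ⟩ := hP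
  have : CoordMap X fun q : D × X => g q.1 := hg.comp inferInstance
  exact ⟨_, hΓ.comp (g := fun q : D × X => (g q.1, q.2)) hQ inferInstance, fun d => hPQ (g d)⟩

theorem IsBoundedClosed.proj_bex (hΓ : IsBoundedClosed E Γ) {D : Type u} [VarContext X D]
    {t : D → X} {Q : D → X → Prop} (ht : CoordMap X t)
    (hQ : Γ.proj fun q : D × X => Q q.1 q.2) : Γ.proj fun d => ∃ x, E x (t d) ∧ Q d x := by
  obtain ⟨R, hR, hQR⟩ := hQ
  refine ⟨fun q => ∃ x, E x (t q.1) ∧ R ((q.1, x), q.2),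
    hΓ.bex (ht.comp inferInstance) <|
      hΓ.comp (g := fun r : (D × X) × X => ((r.1.1, r.2), r.1.2)) hR inferInstance, fun d => ?_⟩
  simp only [fun x => hQR (d, x), ← exists_and_left]
  exact exists_comm

theorem IsBoundedClosed.proj_ball (hΓ : IsBoundedClosed E Γ) (hcoll : Collects E Γ) {D : Type u}
    [VarContext X D] {t : D → X} {Q : D → X → Prop} (ht : CoordMap X t)
    (hQ : Γ.proj fun q : D × X => Q q.1 q.2) : Γ.proj fun d => ∀ x, E x (t d) → Q d x := by
  obtain ⟨R, hR, hQR⟩ := hQ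
  refine ⟨fun q => ∀ x, E x (t q.1) → ∃ y, E y q.2 ∧ R ((q.1, x), y),
    hΓ.ball (ht.comp inferInstance) <| hΓ.bex inferInstance <|
      hΓ.comp (g := fun r : ((D × X) × X) × X => ((r.1.1.1, r.1.2), r.2)) hR inferInstance,
    fun d => ?_⟩
  simp only [fun x => hQR (d, x)]
  refine ⟨hcoll (fun q => R ((d, q.1), q.2)) ?_ (t d),
    fun ⟨c, hc⟩ x hx => (hc x hx).imp fun _ h => h.2⟩
  exact hΓ.comp (g := fun q : X × X => ((d, q.1), q.2)) hR inferInstance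

theorem IsBoundedClosed.proj [Nonempty X] (hΓ : IsBoundedClosed E Γ) (hpair : PairAx E)
    (hcoll : Collects E Γ) : IsBoundedClosed E Γ.proj where
  delta0 hP := hΓ.le_proj (hΓ.delta0 hP)
  comp := hΓ.proj_comp
  and := hΓ.proj_and hpair
  or := hΓ.proj_or
  bex := hΓ.proj_bex
  ball := hΓ.proj_ball hcoll

end DefClass

open DefClass

/-- The class of `Σₖ` predicates with parameters: `Δ₀` for `k = 0`, and projections of
complements of `Σₖ` predicates for `k + 1`. -/
def sigmaClass (E : X → X → Prop) : ℕ → DefClass X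
  | 0 => fun _ _ => Delta0Def E
  | k + 1 => (sigmaClass E k).dual.proj

/-- The predicate `P` is `Σₖ` with parameters. -/
class SigmaDef (E : X → X → Prop) (k : ℕ) {D : Type u} [VarContext X D] (P : D → Prop) :
    Prop where
  mem_sigmaClass : sigmaClass E k P

/-- The predicate `P` is `Πₖ` with parameters. -/
class PiDef (E : X → X → Prop) (k : ℕ) {D : Type u} [VarContext X D] (P : D → Prop) : Prop where
  mem_dual : (sigmaClass E k).dual P

/-- The axioms that make the `Σₖ` and `Πₖ` predicates closed under bounded quantification:
pairing, and collection for the `Πⱼ` relations with `j < k`. -/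
class HierarchyLevel (E : X → X → Prop) (k : ℕ) : Prop where
  nonempty : Nonempty X
  pair : PairAx E
  collects : ∀ j < k, Collects E (sigmaClass E j).dual

theorem HierarchyLevel.of_succ {E : X → X → Prop} {k : ℕ} (h : HierarchyLevel E (k + 1)) :
    HierarchyLevel E k :=
  ⟨h.nonempty, h.pair, fun j hj => h.collects j (hj.trans k.lt_succ_self)⟩

theorem isBoundedClosed_sigmaClass {E : X → X → Prop} {k : ℕ} (h : HierarchyLevel E k) :
    IsBoundedClosed E (sigmaClass E k) := by
  induction k with
  | zero => exact isBoundedClosed_delta0Def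
  | succ k ih =>
    have := h.nonempty
    exact (ih h.of_succ).dual.proj h.pair (h.collects k k.lt_succ_self)

section Instances

variable {E : X → X → Prop} {k : ℕ} {D D' : Type u} [VarContext X D] [VarContext X D']
  {P Q : D → Prop} {R : D → X → Prop}

namespace SigmaDef

theorem comp [h : HierarchyLevel E k] {P : D' → Prop} {g : D → D'} (hP : SigmaDef E k P)
    (hg : CoordMap X g) : SigmaDef E k fun d => P (g d) :=
  ⟨(isBoundedClosed_sigmaClass h).comp hP.1 hg⟩

instance (priority := low) of_piDef [h : HierarchyLevel E k] [hP : PiDef E k P] :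
    SigmaDef E (k + 1) P :=
  have := h.nonempty
  ⟨(isBoundedClosed_sigmaClass h).dual.le_proj hP.1⟩

instance (priority := high) of_delta0Def [h : HierarchyLevel E k] [hP : Delta0Def E P] :
    SigmaDef E k P :=
  ⟨(isBoundedClosed_sigmaClass h).delta0 hP⟩

instance not [hP : PiDef E k P] : SigmaDef E k fun d => ¬ P d := ⟨hP.1⟩

instance and [h : HierarchyLevel E k] [hP : SigmaDef E k P] [hQ : SigmaDef E k Q] :
    SigmaDef E k fun d => P d ∧ Q d :=
  ⟨(isBoundedClosed_sigmaClass h).and hP.1 hQ.1⟩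

instance or [h : HierarchyLevel E k] [hP : SigmaDef E k P] [hQ : SigmaDef E k Q] :
    SigmaDef E k fun d => P d ∨ Q d :=
  ⟨(isBoundedClosed_sigmaClass h).or hP.1 hQ.1⟩

instance imp [h : HierarchyLevel E k] [hP : PiDef E k P] [hQ : SigmaDef E k Q] :
    SigmaDef E k fun d => P d → Q d := by
  simp only [imp_iff_not_or]
  infer_instance

instance ex [h : HierarchyLevel E k] [hk : NeZero k]
    [hR : SigmaDef E k fun q : D × X => R q.1 q.2] : SigmaDef E k fun d => ∃ x, R d x := by
  obtain ⟨k, rfl⟩ := Nat.exists_eq_succ_of_ne_zero hk.out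
  exact ⟨(isBoundedClosed_sigmaClass h.of_succ).dual.proj_exists h.pair hR.1⟩

instance bex [h : HierarchyLevel E k] {t : D → X} [ht : CoordMap X t]
    [hR : SigmaDef E k fun q : D × X => R q.1 q.2] :
    SigmaDef E k fun d => ∃ x, E x (t d) ∧ R d x :=
  ⟨(isBoundedClosed_sigmaClass h).bex ht hR.1⟩

instance ball [h : HierarchyLevel E k] {t : D → X} [ht : CoordMap X t]
    [hR : SigmaDef E k fun q : D × X => R q.1 q.2] :
    SigmaDef E k fun d => ∀ x, E x (t d) → R d x :=
  ⟨(isBoundedClosed_sigmaClass h).ball ht hR.1⟩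

instance (priority := low) comp₁ [HierarchyLevel E k] {P : X → Prop} {a : D → X}
    [hP : SigmaDef E k P] [ha : CoordMap X a] : SigmaDef E k fun d => P (a d) :=
  hP.comp ha

instance (priority := low) comp₂ [HierarchyLevel E k] {P : X → X → Prop} {a b : D → X}
    [hP : SigmaDef E k fun q : X × X => P q.1 q.2] [CoordMap X a] [CoordMap X b] :
    SigmaDef E k fun d => P (a d) (b d) :=
  hP.comp (g := fun d => (a d, b d)) inferInstance

instance (priority := low) comp₃ [HierarchyLevel E k] {P : X → X → X → Prop} {a b c : D → X}
    [hP : SigmaDef E k fun q : X × X × X => P q.1 q.2.1 q.2.2] [CoordMap X a] [CoordMap X b]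
    [CoordMap X c] : SigmaDef E k fun d => P (a d) (b d) (c d) :=
  hP.comp (g := fun d => (a d, b d, c d)) inferInstance

instance (priority := low) of_uncurry [HierarchyLevel E k] {P : X → X → Prop} {a : X}
    [hP : SigmaDef E k fun q : X × X => P q.1 q.2] : SigmaDef E k (P a) :=
  hP.comp (.prod (f := fun _ => a) (g := fun x => x))

theorem exists_piDef (hP : SigmaDef E (k + 1) P) :
    ∃ R : D → X → Prop, PiDef E k (fun q : D × X => R q.1 q.2) ∧ ∀ d, P d ↔ ∃ y, R d y := by
  obtain ⟨R, hR, hPR⟩ := hP.mem_sigmaClass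
  exact ⟨fun d y => R (d, y), ⟨hR⟩, hPR⟩

end SigmaDef

namespace PiDef

theorem of_not (hP : SigmaDef E k fun d => ¬ P d) : PiDef E k P := ⟨hP.1⟩

theorem comp [HierarchyLevel E k] {P : D' → Prop} {g : D → D'} (hP : PiDef E k P)
    (hg : CoordMap X g) : PiDef E k fun d => P (g d) :=
  of_not ((SigmaDef.not (hP := hP)).comp hg)

instance not [hP : SigmaDef E k P] : PiDef E k fun d => ¬ P d :=
  of_not (by simpa only [not_not])

instance (priority := low) of_sigmaDef [HierarchyLevel E k] [SigmaDef E k P] :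
    PiDef E (k + 1) P :=
  of_not inferInstance

instance (priority := high) of_delta0Def [HierarchyLevel E k] [Delta0Def E P] : PiDef E k P :=
  of_not inferInstance

instance and [HierarchyLevel E k] [PiDef E k P] [PiDef E k Q] : PiDef E k fun d => P d ∧ Q d :=
  of_not (by simp only [not_and_or]; infer_instance)

instance or [HierarchyLevel E k] [PiDef E k P] [PiDef E k Q] : PiDef E k fun d => P d ∨ Q d :=
  of_not (by simp only [not_or]; infer_instance)

instance imp [HierarchyLevel E k] [SigmaDef E k P] [PiDef E k Q] :
    PiDef E k fun d => P d → Q d := by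
  simp only [imp_iff_not_or]
  infer_instance

instance all [HierarchyLevel E k] [NeZero k] [PiDef E k fun q : D × X => R q.1 q.2] :
    PiDef E k fun d => ∀ x, R d x :=
  of_not (by simp only [not_forall]; infer_instance)

instance bex [HierarchyLevel E k] {t : D → X} [CoordMap X t]
    [PiDef E k fun q : D × X => R q.1 q.2] : PiDef E k fun d => ∃ x, E x (t d) ∧ R d x :=
  of_not (by simp only [not_exists, not_and]; infer_instance)

instance ball [HierarchyLevel E k] {t : D → X} [CoordMap X t]
    [PiDef E k fun q : D × X => R q.1 q.2] : PiDef E k fun d => ∀ x, E x (t d) → R d x :=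
  of_not (by simp only [not_forall, exists_prop]; infer_instance)

instance (priority := low) comp₁ [HierarchyLevel E k] {P : X → Prop} {a : D → X}
    [hP : PiDef E k P] [ha : CoordMap X a] : PiDef E k fun d => P (a d) :=
  hP.comp ha

instance (priority := low) comp₂ [HierarchyLevel E k] {P : X → X → Prop} {a b : D → X}
    [hP : PiDef E k fun q : X × X => P q.1 q.2] [CoordMap X a] [CoordMap X b] :
    PiDef E k fun d => P (a d) (b d) :=
  hP.comp (g := fun d => (a d, b d)) inferInstance

instance (priority := low) comp₃ [HierarchyLevel E k] {P : X → X → X → Prop} {a b c : D → X}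
    [hP : PiDef E k fun q : X × X × X => P q.1 q.2.1 q.2.2] [CoordMap X a] [CoordMap X b]
    [CoordMap X c] : PiDef E k fun d => P (a d) (b d) (c d) :=
  hP.comp (g := fun d => (a d, b d, c d)) inferInstance

instance (priority := low) of_uncurry [HierarchyLevel E k] {P : X → X → Prop} {a : X}
    [hP : PiDef E k fun q : X × X => P q.1 q.2] : PiDef E k (P a) :=
  hP.comp (.prod (f := fun _ => a) (g := fun x => x))

end PiDef

instance SigmaDef.iff [HierarchyLevel E k] [SigmaDef E k P] [PiDef E k P] [SigmaDef E k Q]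
    [PiDef E k Q] : SigmaDef E k fun d => P d ↔ Q d := by
  simp only [iff_iff_implies_and_implies]
  infer_instance

instance PiDef.iff [HierarchyLevel E k] [SigmaDef E k P] [PiDef E k P] [SigmaDef E k Q]
    [PiDef E k Q] : PiDef E k fun d => P d ↔ Q d := by
  simp only [iff_iff_implies_and_implies]
  infer_instance

end Instances

/-- The structure `⟨X, E⟩` is a model of `MOST + Π₁-Collection`. -/
class MOSTColl (E : X → X → Prop) : Prop where
  most : ModelMOST E
  collection : CollectionScheme E Pi1C

section Model

variable (E : X → X → Prop) [hE : MOSTColl E]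

theorem pairAx : PairAx E := hE.most.1.1.2.2.1

theorem unionAx : UnionAx E := hE.most.1.1.2.2.2.1

theorem powerAx : PowerAx E := hE.most.1.2

variable {E}

theorem eq_of_forall_mem_iff {a b : X} (h : ∀ z, E z a ↔ E z b) : a = b := hE.most.1.1.1 a b h

theorem collects_pi_one : Collects E (sigmaClass E 1).dual := by
  rintro Q ⟨R, hR, hQR⟩ w hw
  have : Nonempty X := ⟨w⟩
  have hR' : Delta0Def E fun v : Fin 3 → X => ¬ R ((v 0, v 1), v 2) :=
    .comp (g := fun v : Fin 3 → X => ((v 0, v 1), v 2)) hR inferInstance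
  obtain ⟨n, φ, p, hφ, hφR⟩ := hR'.exists_formula_append
  have hφQ (x y : X) : Q (x, y) ↔ (SF.all φ).Eval E (Fin.snoc (Fin.snoc p x) y) := by
    have hφR (z : X) : φ.Eval E (Fin.snoc (Fin.snoc (Fin.snoc p x) y) z) ↔ ¬ R ((x, y), z) := by
      rw [← append_triple]
      exact hφR ![x, y, z]
    simpa only [SF.Eval, hφR, not_exists, not_not] using not_congr (hQR (x, y))
  simp only [hφQ] at hw ⊢
  exact hE.collection n (.all φ) ⟨φ, hφ, rfl⟩ p w hw

variable (E) in
theorem exists_separation_of_sigma_one {P : X → Prop} (hP : SigmaDef E 1 P) (w : X) :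
    ∃ y, ∀ x, E x y ↔ E x w ∧ P x := by
  obtain ⟨Q, hQ, hPQ⟩ := hP
  have : Nonempty X := ⟨w⟩
  have hQ' : Delta0Def E fun v : Fin 2 → X => ¬ ¬ Q (v 0, v 1) :=
    .not (hP := .comp (g := fun v : Fin 2 → X => (v 0, v 1)) hQ inferInstance)
  obtain ⟨n, φ, p, hφ, hφQ⟩ := hQ'.exists_formula_append
  have hφP (x : X) : P x ↔ (SF.ex φ).Eval E (Fin.snoc p x) := by
    have hφQ (y : X) : φ.Eval E (Fin.snoc (Fin.snoc p x) y) ↔ Q (x, y) := by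
      rw [← append_pair]
      exact (hφQ ![x, y]).trans not_not
    simpa only [SF.Eval, hφQ] using hPQ x
  simp only [hφP]
  exact hE.most.2.1 n (.ex φ) ⟨φ, hφ, rfl⟩ p w

instance hierarchyLevel_zero : HierarchyLevel E 0 where
  nonempty := ⟨hE.most.1.1.2.1.choose⟩
  pair := pairAx E
  collects _ h := absurd h (Nat.not_lt_zero _)

instance hierarchyLevel_one : HierarchyLevel E 1 where
  nonempty := hierarchyLevel_zero (E := E).nonempty
  pair := pairAx E
  collects := by
    refine Nat.forall_lt_succ_right.2 ⟨by simp, fun Q hQ => collects_pi_one Q ?_⟩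
    have : Delta0Def E fun q => ¬ Q q := hQ
    exact (SigmaDef.of_piDef (E := E) (k := 0)).mem_sigmaClass

instance hierarchyLevel_two : HierarchyLevel E 2 where
  nonempty := hierarchyLevel_zero (E := E).nonempty
  pair := pairAx E
  collects := Nat.forall_lt_succ_right.2 ⟨hierarchyLevel_one.collects, collects_pi_one⟩

end Model

/-! ## Set theory in a model -/

section Pairs

variable {E : X → X → Prop} {p x y z x' y' : X}

/-- `z` is the unordered pair `{x, y}`. -/
def IsUnorderedPair (E : X → X → Prop) (z x y : X) : Prop := ∀ w, E w z ↔ w = x ∨ w = y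

theorem isPair_iff :
    IsPair E p x y ↔ ∀ z, E z p ↔ IsUnorderedPair E z x x ∨ IsUnorderedPair E z x y := by
  simp only [IsPair, IsUnorderedPair, or_self]

theorem IsUnorderedPair.inj (h : IsUnorderedPair E z x y) (h' : IsUnorderedPair E z x' y') :
    x = x' ∧ y = y' ∨ x = y' ∧ y = x' := by
  simp only [IsUnorderedPair] at h h'
  have hx := (h' x).1 ((h x).2 (.inl rfl))
  have hy := (h' y).1 ((h y).2 (.inr rfl))
  have hx' := (h x').1 ((h' x').2 (.inl rfl))
  have hy' := (h y').1 ((h' y').2 (.inr rfl))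
  grind

end Pairs

section Model

variable {E : X → X → Prop} [hE : MOSTColl E] {P : X → Prop} {R : X → X → Prop}
  {p q w x y z x' y' : X}

instance : Delta0Def E fun q : X × X => SubE E q.1 q.2 := by
  unfold SubE; infer_instance

instance : Delta0Def E (TransSet E) := by
  unfold TransSet; infer_instance

instance : Delta0Def E (IsOrdinal E) := by
  unfold IsOrdinal; infer_instance

instance : Delta0Def E fun q : X × X => SuccOf E q.1 q.2 := by
  refine (inferInstance : Delta0Def E fun q : X × X =>
    (∀ z, E z q.2 → E z q.1 ∨ z = q.1) ∧ (∀ z, E z q.1 → E z q.2) ∧ E q.1 q.2).congr fun q => ?_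
  simp only [SuccOf, iff_iff_implies_and_implies, forall_and, or_imp, forall_eq]

instance : Delta0Def E fun q : X × X × X => IsUnorderedPair E q.1 q.2.1 q.2.2 := by
  refine (inferInstance : Delta0Def E fun q : X × X × X =>
    (∀ w, E w q.1 → w = q.2.1 ∨ w = q.2.2) ∧ E q.2.1 q.1 ∧ E q.2.2 q.1).congr fun q => ?_
  simp only [IsUnorderedPair, iff_iff_implies_and_implies, forall_and, or_imp, forall_eq]

theorem IsUnorderedPair.unique (hz : IsUnorderedPair E z x y) (hw : IsUnorderedPair E w x y) :
    z = w :=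
  eq_of_forall_mem_iff fun u => (hz u).trans (hw u).symm

variable (E) in
theorem exists_unorderedPair (x y : X) : ∃ z, IsUnorderedPair E z x y := pairAx E x y

theorem isPair_iff_bounded : IsPair E p x y ↔
    (∀ z, E z p → IsUnorderedPair E z x x ∨ IsUnorderedPair E z x y) ∧
      (∃ z, E z p ∧ IsUnorderedPair E z x x) ∧ ∃ z, E z p ∧ IsUnorderedPair E z x y := by
  rw [isPair_iff]
  refine ⟨fun h => ⟨fun z => (h z).1, ?_, ?_⟩, fun ⟨h, ⟨s, hsp, hs⟩, t, htp, ht⟩ z => ⟨h z, ?_⟩⟩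
  · exact (exists_unorderedPair E x x).imp fun z hz => ⟨(h z).2 (.inl hz), hz⟩
  · exact (exists_unorderedPair E x y).imp fun z hz => ⟨(h z).2 (.inr hz), hz⟩
  · rintro (hz | hz)
    · exact hz.unique hs ▸ hsp
    · exact hz.unique ht ▸ htp

instance : Delta0Def E fun q : X × X × X => IsPair E q.1 q.2.1 q.2.2 :=
  (inferInstance : Delta0Def E fun q : X × X × X =>
    (∀ z, E z q.1 → IsUnorderedPair E z q.2.1 q.2.1 ∨ IsUnorderedPair E z q.2.1 q.2.2) ∧
      (∃ z, E z q.1 ∧ IsUnorderedPair E z q.2.1 q.2.1) ∧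
        ∃ z, E z q.1 ∧ IsUnorderedPair E z q.2.1 q.2.2).congr fun _ => isPair_iff_bounded

instance : Delta0Def E fun q : X × X × X => FunApp E q.1 q.2.1 q.2.2 := by
  unfold FunApp; infer_instance

variable (E) in
theorem exists_isPair (x y : X) : ∃ p, IsPair E p x y := by
  obtain ⟨s, hs⟩ := exists_unorderedPair E x x
  obtain ⟨t, ht⟩ := exists_unorderedPair E x y
  obtain ⟨p, hp⟩ := exists_unorderedPair E s t
  refine ⟨p, isPair_iff_bounded.2 ⟨fun z hz => ?_, ⟨s, (hp s).2 (.inl rfl), hs⟩,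
    t, (hp t).2 (.inr rfl), ht⟩⟩
  rcases (hp z).1 hz with rfl | rfl
  exacts [.inl hs, .inr ht]

theorem IsPair.unique (hp : IsPair E p x y) (hq : IsPair E q x y) : p = q :=
  eq_of_forall_mem_iff fun z => (hp z).trans (hq z).symm

theorem IsPair.inj (h : IsPair E p x y) (h' : IsPair E p x' y') : x = x' ∧ y = y' := by
  obtain ⟨hp, ⟨s, hsp, hs⟩, t, htp, ht⟩ := isPair_iff_bounded.1 h
  obtain ⟨hp', -, t', htp', ht'⟩ := isPair_iff_bounded.1 h'
  have hs_eq := (hp' s hsp).imp hs.inj hs.inj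
  have ht_eq := (hp' t htp).imp ht.inj ht.inj
  have ht'_eq := (hp t' htp').imp ht'.inj ht'.inj
  grind

variable (E P) in
theorem exists_separation_pi_one [hP : PiDef E 1 P] (w : X) :
    ∃ y, ∀ x, E x y ↔ E x w ∧ P x := by
  obtain ⟨z, hz⟩ := exists_separation_of_sigma_one E (P := fun x => ¬ P x) inferInstance w
  obtain ⟨y, hy⟩ := hE.most.1.1.2.2.2.2.1 w z
  refine ⟨y, fun x => ?_⟩
  rw [hy, hz]
  tauto

variable (E P) in
theorem exists_separation [hP : SigmaDef E 2 P] [hP' : PiDef E 2 P] (w : X) :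
    ∃ y, ∀ x, E x y ↔ E x w ∧ P x := by
  obtain ⟨Q, hQ, hPQ⟩ := hP.exists_piDef
  obtain ⟨Q', hQ', hPQ'⟩ := (SigmaDef.not (hP := hP')).exists_piDef
  have hQQ' : PiDef E 1 fun q : X × X => Q q.1 q.2 ∨ Q' q.1 q.2 := inferInstance
  obtain ⟨c, hc⟩ := collects_pi_one (fun q => Q q.1 q.2 ∨ Q' q.1 q.2) hQQ'.mem_dual w fun x _ => by
    simpa only [exists_or, ← hPQ, ← hPQ'] using em (P x)
  obtain ⟨y, hy⟩ := exists_separation_pi_one E (fun x => ∃ u, E u c ∧ Q x u) w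
  refine ⟨y, fun x => (hy x).trans <| and_congr_right fun hx =>
    ⟨fun ⟨u, _, hu⟩ => (hPQ x).2 ⟨u, hu⟩, fun hPx => ?_⟩⟩
  obtain ⟨u, huc, hu | hu⟩ := hc x hx
  · exact ⟨u, huc, hu⟩
  · exact absurd hPx ((hPQ' x).2 ⟨u, hu⟩)

variable (E R) in
theorem exists_strong_collection [hR : SigmaDef E 2 fun q : X × X => R q.1 q.2]
    (hw : ∀ x, E x w → ∃ y, R x y) :
    ∃ c, (∀ x, E x w → ∃ y, E y c ∧ R x y) ∧ ∀ y, E y c → ∃ x, E x w ∧ R x y := by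
  obtain ⟨Q, hQ, hRQ⟩ : ∃ Q : X → X → X → Prop,
      PiDef E 1 (fun q : X × X × X => Q q.1 q.2.1 q.2.2) ∧ ∀ x y, R x y ↔ ∃ u, Q x y u := by
    obtain ⟨Q, hQ, hRQ⟩ := hR.exists_piDef
    exact ⟨fun x y => Q (x, y),
      PiDef.comp (g := fun q : X × X × X => ((q.1, q.2.1), q.2.2)) hQ inferInstance,
      fun x y => hRQ (x, y)⟩
  have hQ' : PiDef E 1 fun q : X × X => ∃ y, E y q.2 ∧ ∃ u, E u q.2 ∧ Q q.1 y u :=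
    inferInstance
  obtain ⟨C, hC⟩ := collects_pi_one _ hQ'.mem_dual w fun x hx => by
    obtain ⟨y, hy⟩ := hw x hx
    obtain ⟨u, hu⟩ := (hRQ x y).1 hy
    exact (exists_unorderedPair E y u).imp fun z hz =>
      ⟨y, (hz y).2 (.inl rfl), u, (hz u).2 (.inr rfl), hu⟩
  obtain ⟨c, hc⟩ := unionAx E C
  obtain ⟨d, hd⟩ := exists_separation_pi_one E (fun y => ∃ x, E x w ∧ ∃ u, E u c ∧ Q x y u) c
  refine ⟨d, fun x hx => ?_, fun y hy => ?_⟩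
  · obtain ⟨z, hz, y, hy, u, hu, hQxyu⟩ := hC x hx
    have hyc := (hc y).2 ⟨z, hz, hy⟩
    exact ⟨y, (hd y).2 ⟨hyc, x, hx, u, (hc u).2 ⟨z, hz, hu⟩, hQxyu⟩, (hRQ x y).2 ⟨u, hQxyu⟩⟩
  · obtain ⟨-, x, hx, u, -, hQxyu⟩ := (hd y).1 hy
    exact ⟨x, hx, (hRQ x y).2 ⟨u, hQxyu⟩⟩

end Model

theorem IsOrdinal.of_mem {E : X → X → Prop} {a x : X} (ha : IsOrdinal E a) (hx : E x a) :
    IsOrdinal E x :=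
  ⟨ha.2 x hx, fun y hy => ha.2 y (ha.1 x hx y hy)⟩

/-- The function `c` chooses the element `y` from `u`. -/
def Chooses (E : X → X → Prop) (c u y : X) : Prop := E y u ∧ FunApp E c u y

/-- The function `c` chooses an element from each nonempty subset of `A`. -/
def IsChoiceFunction (E : X → X → Prop) (c A : X) : Prop :=
  ∀ u, SubE E u A → (∃ y, E y u) → ∃! y, Chooses E c u y

theorem IsChoiceFunction.unique {E : X → X → Prop} {c u y z A : X} (hc : IsChoiceFunction E c A)
    (hu : SubE E u A) (hy : Chooses E c u y) (hz : Chooses E c u z) : y = z :=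
  (hc u hu ⟨y, hy.1⟩).unique hy hz

section Model

variable {E : X → X → Prop} [hE : MOSTColl E] {P : X → Prop} {R : X → X → Prop}
  {a b f w x y : X}

variable (E R) in
theorem exists_image [SigmaDef E 2 fun q : X × X => R q.1 q.2]
    (hw : ∀ x, E x w → ∃! y, R x y) : ∃ c, ∀ y, E y c ↔ ∃ x, E x w ∧ R x y := by
  obtain ⟨c, hwc, hcw⟩ := exists_strong_collection E R fun x hx => (hw x hx).exists
  refine ⟨c, fun y => ⟨hcw y, fun ⟨x, hx, hxy⟩ => ?_⟩⟩
  obtain ⟨y', hy', hxy'⟩ := hwc x hx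
  exact (hw x hx).unique hxy hxy' ▸ hy'

/-- The elements of `f` are the ordered pairs of elements related by `R`. -/
def IsGraph (E : X → X → Prop) (f : X) (R : X → X → Prop) : Prop :=
  ∀ q, E q f ↔ ∃ x y, IsPair E q x y ∧ R x y

theorem IsGraph.funApp_iff (hf : IsGraph E f R) : FunApp E f x y ↔ R x y := by
  refine ⟨fun ⟨q, hq, hqxy⟩ => ?_, fun h => ?_⟩
  · obtain ⟨x', y', hqxy', h⟩ := (hf q).1 hq
    obtain ⟨rfl, rfl⟩ := hqxy.inj hqxy'
    exact h
  · exact (exists_isPair E x y).imp fun q hq => ⟨(hf q).2 ⟨x, y, hq, h⟩, hq⟩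

variable (E R) in
theorem exists_isGraph [SigmaDef E 2 fun q : X × X => R q.1 q.2]
    (hw : ∀ x, E x w → ∃! y, R x y) : ∃ f, IsGraph E f fun x y => E x w ∧ R x y := by
  obtain ⟨f, hf⟩ := exists_image E (fun x q => ∃ y, IsPair E q x y ∧ R x y) (w := w)
    fun x hx => by
      obtain ⟨y, hxy, hy⟩ := hw x hx
      obtain ⟨q, hq⟩ := exists_isPair E x y
      exact ⟨q, ⟨y, hq, hxy⟩, fun q' ⟨y', hq', hxy'⟩ => (hy y' hxy' ▸ hq').unique hq⟩
  refine ⟨f, fun q => (hf q).trans ?_⟩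
  simp only [← exists_and_left, and_left_comm]

variable (E) in
theorem exists_adjoin (a x : X) : ∃ z, ∀ w, E w z ↔ E w a ∨ w = x := by
  obtain ⟨s, hs⟩ := exists_unorderedPair E x x
  obtain ⟨t, ht⟩ := exists_unorderedPair E a s
  obtain ⟨z, hz⟩ := unionAx E t
  refine ⟨z, fun w => ?_⟩
  simp only [hz, ht _, or_and_right, exists_or, exists_eq_left, hs w, or_self]

variable (E) in
theorem exists_transSet_mem (x : X) : ∃ t, TransSet E t ∧ E x t := by
  obtain ⟨s, hs⟩ := exists_unorderedPair E x x
  obtain ⟨t, ht, hst⟩ := hE.most.1.1.2.2.2.2.2.1 s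
  exact ⟨t, ht, hst x ((hs x).2 (.inl rfl))⟩

variable (E) in
theorem exists_minimal [SigmaDef E 2 P] [PiDef E 2 P] (hx : P x) :
    ∃ m, P m ∧ ∀ y, E y m → ¬ P y := by
  obtain ⟨t, ht, hxt⟩ := exists_transSet_mem E x
  obtain ⟨a, ha⟩ := exists_separation E P t
  obtain ⟨m, hma, hm⟩ := hE.most.1.1.2.2.2.2.2.2.2.2 a ⟨x, (ha x).2 ⟨hxt, hx⟩⟩
  obtain ⟨hmt, hPm⟩ := (ha m).1 hma
  exact ⟨m, hPm, fun y hy hPy => hm y hy ((ha y).2 ⟨ht m hmt y hy, hPy⟩)⟩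

variable (E) in
theorem mem_induction [SigmaDef E 2 P] [PiDef E 2 P] (ih : ∀ x, (∀ y, E y x → P y) → P x)
    (x : X) : P x := by
  by_contra hx
  obtain ⟨m, hm, hmin⟩ := exists_minimal E (P := fun x => ¬ P x) hx
  exact hm <| ih m fun y hy => not_not.1 (hmin y hy)

theorem mem_irrefl (x : X) : ¬ E x x := by
  exact mem_induction E (P := fun x => ¬ E x x) (fun x ih hx => ih x hx hx) x

theorem IsOrdinal.trichotomy (ha : IsOrdinal E a) (hb : IsOrdinal E b) :
    E a b ∨ a = b ∨ E b a := by
  suffices ∀ b, IsOrdinal E b → E a b ∨ a = b ∨ E b a from this b hb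
  revert ha
  refine mem_induction E
    (P := fun a => IsOrdinal E a → ∀ b, IsOrdinal E b → E a b ∨ a = b ∨ E b a)
    (fun a iha ha b => ?_) a
  refine mem_induction E
    (P := fun b => IsOrdinal E b → E a b ∨ a = b ∨ E b a) (fun b ihb hb => ?_) b
  by_contra! h
  refine h.2.1 (eq_of_forall_mem_iff (E := E) fun x => ⟨fun hx => ?_, fun hx => ?_⟩)
  · rcases iha x hx (ha.of_mem hx) b hb with hxb | rfl | hbx
    exacts [hxb, absurd hx h.2.2, absurd (ha.1 x hx b hbx) h.2.2]
  · rcases ihb x hx (hb.of_mem hx) with hax | rfl | hxa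
    exacts [absurd (hb.1 x hx a hax) h.1, absurd hx h.1, hxa]

instance : Delta0Def E fun q : X × X × X => Chooses E q.1 q.2.1 q.2.2 := by
  unfold Chooses; infer_instance

/-- `g` is the set `{u} × v`. -/
def IsFiber (E : X → X → Prop) (u v g : X) : Prop := ∀ q, E q g ↔ ∃ y, E y v ∧ IsPair E q u y

instance : SigmaDef E 2 fun q : X × X × X => IsFiber E q.1 q.2.1 q.2.2 := by
  unfold IsFiber; infer_instance

variable (E) in
theorem existsUnique_isFiber (u v : X) : ∃! g, IsFiber E u v g := by
  obtain ⟨g, hg⟩ := exists_image E (fun y q => IsPair E q u y) (w := v) fun y _ =>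
    (exists_isPair E u y).imp fun q hq => ⟨hq, fun q' hq' => hq'.unique hq⟩
  exact ⟨g, hg, fun g' hg' => eq_of_forall_mem_iff fun q => (hg' q).trans (hg q).symm⟩

variable (E) in
theorem exists_prod (v w : X) : ∃ c, IsGraph E c fun x y => E x v ∧ E y w := by
  obtain ⟨a, ha⟩ := exists_image E (fun u g => IsFiber E u w g) (w := v) fun u _ =>
    existsUnique_isFiber E u w
  obtain ⟨c, hc⟩ := unionAx E a
  refine ⟨c, fun q => (hc q).trans ⟨fun ⟨g, hg, hq⟩ => ?_, fun ⟨x, y, hq, hx, hy⟩ => ?_⟩⟩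
  · obtain ⟨x, hx, hxg⟩ := (ha g).1 hg
    obtain ⟨y, hy, hq⟩ := (hxg q).1 hq
    exact ⟨x, y, hq, hx, hy⟩
  · obtain ⟨g, hg, -⟩ := existsUnique_isFiber E x w
    exact ⟨g, (ha g).2 ⟨x, hx, hg⟩, (hg q).2 ⟨y, hy, hq⟩⟩

variable (E) in
-- The axiom of choice is applied to the disjoint sets `{u} × u`.
theorem exists_isChoiceFunction (A : X) : ∃ c, IsChoiceFunction E c A := by
  obtain ⟨Q, hQ⟩ := powerAx E A
  obtain ⟨w, hw⟩ := exists_separation E (fun u => ∃ y, E y u) Q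
  obtain ⟨a, ha⟩ := exists_image E (fun u g => IsFiber E u u g) (w := w) fun u _ =>
    existsUnique_isFiber E u u
  have hne (g : X) (hg : E g a) : ∃ q, E q g := by
    obtain ⟨u, hu, hg⟩ := (ha g).1 hg
    obtain ⟨y, hy⟩ := ((hw u).1 hu).2
    exact (exists_isPair E u y).imp fun q hq => (hg q).2 ⟨y, hy, hq⟩
  have hdisj (g g' : X) (hg : E g a) (hg' : E g' a) (hgg' : g ≠ g') (q : X) (hq : E q g) :
      ¬ E q g' := fun hq' => by
    obtain ⟨u, -, hg⟩ := (ha g).1 hg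
    obtain ⟨u', -, hg'⟩ := (ha g').1 hg'
    obtain ⟨y, -, hq⟩ := (hg q).1 hq
    obtain ⟨y', -, hq'⟩ := (hg' q).1 hq'
    obtain ⟨rfl, -⟩ := hq.inj hq'
    exact hgg' ((existsUnique_isFiber E u u).unique hg hg')
  obtain ⟨c, hc⟩ := hE.most.2.2 a hne hdisj
  refine ⟨c, fun u huA hu => ?_⟩
  obtain ⟨g, hg, -⟩ := existsUnique_isFiber E u u
  obtain ⟨q, ⟨hqc, hqg⟩, hq⟩ := hc g ((ha g).2 ⟨u, (hw u).2 ⟨(hQ u).2 huA, hu⟩, hg⟩)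
  obtain ⟨y, hyu, hquy⟩ := (hg q).1 hqg
  refine ⟨y, ⟨hyu, q, hqc, hquy⟩, fun y' ⟨hyu', q', hqc', hquy'⟩ => ?_⟩
  rw [hq q' ⟨hqc', (hg q').2 ⟨y', hyu', hquy'⟩⟩] at hquy'
  exact (hquy'.inj hquy).2

end Model

/-! ## Recursion along membership -/

section Recursion

variable {E : X → X → Prop} {B : (X → X → Prop) → X → X → Prop} {s s' : X} {β y z : X}

/-- `B F β y`, read: `y` is the value at `β` computed from the values of `F` below `β`, is a
recursion clause: it only looks at `F` on the elements of `β`, and determines `y` when `F` is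
single-valued there. -/
structure IsRecursionClause (E : X → X → Prop) (B : (X → X → Prop) → X → X → Prop) : Prop where
  congr {F G : X → X → Prop} {β y : X} (h : ∀ γ, E γ β → ∀ z, F γ z ↔ G γ z) (hy : B F β y) :
    B G β y
  unique {F : X → X → Prop} {β y y' : X} (h : ∀ γ, E γ β → ∀ z z', F γ z → F γ z' → z = z')
    (hy : B F β y) (hy' : B F β y') : y = y'

/-- The set `s` is a partial solution of the recursion with clause `B`: a set of pairs, with
domain closed under elements, satisfying the clause at each point of the domain. -/
def IsAttempt (E : X → X → Prop) (B : (X → X → Prop) → X → X → Prop) (s : X) : Prop :=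
  ∀ q, E q s → ∃ β y, IsPair E q β y ∧ (∀ γ, E γ β → ∃ z, FunApp E s γ z) ∧ B (FunApp E s) β y

/-- The value at `β` of the class function defined by recursion along membership is `y`. -/
def RecValue (E : X → X → Prop) (B : (X → X → Prop) → X → X → Prop) (β y : X) : Prop :=
  ∃ s, IsAttempt E B s ∧ FunApp E s β y

theorem IsAttempt.recValue (hs : IsAttempt E B s) (h : FunApp E s β y) : RecValue E B β y :=
  ⟨s, hs, h⟩

variable [hE : MOSTColl E]

instance {k : ℕ} [HierarchyLevel E k] [NeZero k]
    [hB : SigmaDef E k fun q : X × X × X => B (FunApp E q.1) q.2.1 q.2.2] :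
    SigmaDef E k fun q : X × X => RecValue E B q.1 q.2 := by
  have : SigmaDef E k fun q : ((X × X) × X) × X => B (FunApp E q.1.1.1) q.1.2 q.2 :=
    hB.comp (g := fun q : ((X × X) × X) × X => (q.1.1.1, q.1.2, q.2)) inferInstance
  have : SigmaDef E k (IsAttempt E B) := by
    unfold IsAttempt; infer_instance
  unfold RecValue; infer_instance

theorem IsAttempt.of_funApp (hs : IsAttempt E B s) (h : FunApp E s β y) :
    (∀ γ, E γ β → ∃ z, FunApp E s γ z) ∧ B (FunApp E s) β y := by
  obtain ⟨q, hq, hqβy⟩ := h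
  obtain ⟨β', y', hqβy', h⟩ := hs q hq
  obtain ⟨rfl, rfl⟩ := hqβy.inj hqβy'
  exact h

theorem IsAttempt.unique (hB : IsRecursionClause E B) (hs : IsAttempt E B s)
    (hs' : IsAttempt E B s') : FunApp E s β y → FunApp E s' β z → y = z := by
  suffices ∀ y y', FunApp E s β y → FunApp E s' β y' → y = y' from this y z
  have : PiDef E 1 fun β => ∀ y y', FunApp E s β y → FunApp E s' β y' → y = y' := inferInstance
  refine mem_induction E (P := fun β => ∀ y y', FunApp E s β y → FunApp E s' β y' → y = y')
    (fun β ih y y' hy hy' => ?_) β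
  obtain ⟨hdom, hBy⟩ := hs.of_funApp hy
  obtain ⟨hdom', hBy'⟩ := hs'.of_funApp hy'
  refine hB.unique (fun γ hγ z z' hz hz' => ?_) hBy (hB.congr (fun γ hγ z => ?_) hBy')
  · obtain ⟨w, hw⟩ := hdom' γ hγ
    exact (ih γ hγ z w hz hw).trans (ih γ hγ z' w hz' hw).symm
  · refine ⟨fun hz => ?_, fun hz => ?_⟩
    · obtain ⟨w, hw⟩ := hdom γ hγ
      exact ih γ hγ w z hw hz ▸ hw
    · obtain ⟨w, hw⟩ := hdom' γ hγ
      exact ih γ hγ z w hz hw ▸ hw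

theorem RecValue.unique (hB : IsRecursionClause E B) :
    RecValue E B β y → RecValue E B β z → y = z :=
  fun ⟨_, hs, hy⟩ ⟨_, hs', hz⟩ => hs.unique hB hs' hy hz

theorem IsAttempt.funApp_iff (hB : IsRecursionClause E B) (hs : IsAttempt E B s)
    (h : FunApp E s β y) : FunApp E s β z ↔ RecValue E B β z :=
  ⟨hs.recValue, fun hz => (hs.recValue h).unique hB hz ▸ h⟩

theorem RecValue.of_mem (h : RecValue E B β y) {γ : X} (hγ : E γ β) : ∃ z, RecValue E B γ z := by
  obtain ⟨s, hs, h⟩ := h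
  exact ((hs.of_funApp h).1 γ hγ).imp fun _ => hs.recValue

theorem RecValue.clause (hB : IsRecursionClause E B) (h : RecValue E B β y) :
    B (RecValue E B) β y := by
  obtain ⟨s, hs, h⟩ := h
  refine hB.congr (fun γ hγ z => ?_) (hs.of_funApp h).2
  exact hs.funApp_iff hB ((hs.of_funApp h).1 γ hγ).choose_spec

variable [SigmaDef E 2 fun q : X × X × X => B (FunApp E q.1) q.2.1 q.2.2]

theorem RecValue.of_clause (hB : IsRecursionClause E B) {D : X} (hD : TransSet E D)
    (hdom : ∀ γ, E γ D → ∃ z, RecValue E B γ z) (hy : B (RecValue E B) D y) :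
    RecValue E B D y := by
  obtain ⟨D', hD'⟩ := exists_adjoin E D D
  obtain ⟨s, hs⟩ := exists_isGraph E
    (fun x z => E x D ∧ RecValue E B x z ∨ x = D ∧ z = y) (w := D') fun x hx => by
      obtain hx | rfl := (hD' x).1 hx
      · have hxD : x ≠ D := fun h => mem_irrefl D (h ▸ hx)
        obtain ⟨z, hz⟩ := hdom x hx
        exact ⟨z, .inl ⟨hx, hz⟩, fun z' hz' => hz'.elim (·.2.unique hB hz) (absurd ·.1 hxD)⟩
      · exact ⟨y, .inr ⟨rfl, rfl⟩, fun z hz => hz.elim (absurd ·.1 (mem_irrefl x)) (·.2)⟩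
  have hbelow (x z : X) (hx : E x D) : FunApp E s x z ↔ RecValue E B x z := by
    refine hs.funApp_iff.trans ⟨fun h => ?_, fun h => ⟨(hD' x).2 (.inl hx), .inl ⟨hx, h⟩⟩⟩
    exact h.2.elim (·.2) fun ⟨h, _⟩ => absurd (h ▸ hx) (mem_irrefl D)
  have htop : FunApp E s D y := hs.funApp_iff.2 ⟨(hD' D).2 (.inr rfl), .inr ⟨rfl, rfl⟩⟩
  refine ⟨s, fun q hq => ?_, htop⟩
  obtain ⟨x, z, hqxz, -, ⟨hx, hz⟩ | ⟨rfl, rfl⟩⟩ := (hs q).1 hq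
  · exact ⟨x, z, hqxz, fun γ hγ => (hz.of_mem hγ).imp fun w => (hbelow γ w (hD x hx γ hγ)).2,
      hB.congr (fun γ hγ w => (hbelow γ w (hD x hx γ hγ)).symm) (hz.clause hB)⟩
  · exact ⟨x, z, hqxz, fun γ hγ => (hdom γ hγ).imp fun w => (hbelow γ w hγ).2,
      hB.congr (fun γ hγ w => (hbelow γ w hγ).symm) hy⟩

end Recursion

/-! ## Well-ordering -/

/-- `f` restricts to a surjection from a subset of `α` onto `t`. Only the values of `f` that lie
in `t` are taken into account. -/
def Enumerates (E : X → X → Prop) (f α t : X) : Prop :=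
  (∀ a, E a α → ∀ x, E x t → ∀ y, E y t → FunApp E f a x → FunApp E f a y → x = y) ∧
    ∀ x, E x t → ∃ a, E a α ∧ FunApp E f a x

/-- The clause of Zermelo's recursion: the value at an ordinal `β` is the element that `c` chooses
from the set `u` of elements of `A` that are not values below `β`. -/
def ZermeloClause (E : X → X → Prop) (A c : X) (F : X → X → Prop) (β y : X) : Prop :=
  IsOrdinal E β ∧ ∃ u, SubE E u A ∧ (∀ z, E z A → (E z u ↔ ¬ ∃ γ, E γ β ∧ F γ z)) ∧
    Chooses E c u y

section Model

variable {E : X → X → Prop} [hE : MOSTColl E] {A c : X}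

set_option synthInstance.maxSize 256 in
instance : Delta0Def E fun q : X × X × X => Enumerates E q.1 q.2.1 q.2.2 := by
  unfold Enumerates; infer_instance

instance {k : ℕ} [HierarchyLevel E k] [NeZero k] :
    SigmaDef E k fun q : X × X × X => ZermeloClause E A c (FunApp E q.1) q.2.1 q.2.2 := by
  unfold ZermeloClause; infer_instance

theorem eq_of_subE_of_forall_mem_iff {u v : X} {P : X → Prop} (hu : SubE E u A) (hv : SubE E v A)
    (hu' : ∀ z, E z A → (E z u ↔ P z)) (hv' : ∀ z, E z A → (E z v ↔ P z)) : u = v :=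
  eq_of_forall_mem_iff fun z =>
    ⟨fun hz => (hv' z (hu z hz)).2 ((hu' z (hu z hz)).1 hz),
      fun hz => (hu' z (hv z hz)).2 ((hv' z (hv z hz)).1 hz)⟩

theorem isRecursionClause_zermeloClause (hc : IsChoiceFunction E c A) :
    IsRecursionClause E (ZermeloClause E A c) where
  congr h := by
    rintro ⟨hβ, u, huA, hu, hy⟩
    refine ⟨hβ, u, huA, fun z hz => (hu z hz).trans <| not_congr ?_, hy⟩
    exact exists_congr fun γ => and_congr_right fun hγ => h γ hγ z
  unique _ := by
    rintro ⟨-, u, huA, hu, hy⟩ ⟨-, v, hvA, hv, hy'⟩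
    obtain rfl := eq_of_subE_of_forall_mem_iff huA hvA hu hv
    exact hc.unique huA hy hy'

theorem ZermeloClause.injective {F : X → X → Prop} (hF : ∀ β y, F β y → ZermeloClause E A c F β y)
    {β γ y : X} (hβ : F β y) (hγ : F γ y) : β = γ := by
  obtain ⟨hβ_ord, u, huA, hu, hyu, -⟩ := hF β y hβ
  obtain ⟨hγ_ord, v, hvA, hv, hyv, -⟩ := hF γ y hγ
  rcases hβ_ord.trichotomy hγ_ord with h | h | h
  · exact absurd ⟨β, h, hβ⟩ ((hv y (hvA y hyv)).1 hyv)
  · exact h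
  · exact absurd ⟨γ, h, hγ⟩ ((hu y (huA y hyu)).1 hyu)

theorem exists_isOrdinal_mem_iff_recValue (hc : IsChoiceFunction E c A) :
    ∃ D, IsOrdinal E D ∧ ∀ β, E β D ↔ ∃ y, RecValue E (ZermeloClause E A c) β y := by
  set F := RecValue E (ZermeloClause E A c)
  have hF (β y : X) (h : F β y) : ZermeloClause E A c F β y :=
    RecValue.clause (isRecursionClause_zermeloClause hc) h
  obtain ⟨W, hW⟩ := exists_separation_of_sigma_one E (P := fun y => ∃ β, F β y) inferInstance A
  obtain ⟨D, hD⟩ := exists_image E (fun y β => F β y) (w := W) fun y hy =>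
    ((hW y).1 hy).2.imp fun β hβ => ⟨hβ, fun γ hγ => ZermeloClause.injective hF hγ hβ⟩
  have hDF (β : X) : E β D ↔ ∃ y, F β y := by
    refine (hD β).trans ⟨fun ⟨y, _, hy⟩ => ⟨y, hy⟩, fun ⟨y, hy⟩ => ⟨y, (hW y).2 ⟨?_, β, hy⟩, hy⟩⟩
    obtain ⟨-, u, huA, -, hyu, -⟩ := hF β y hy
    exact huA y hyu
  refine ⟨D, ⟨fun β hβ γ hγ => ?_, fun β hβ => ?_⟩, hDF⟩ <;> obtain ⟨y, hy⟩ := (hDF β).1 hβ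
  · exact (hDF γ).2 (RecValue.of_mem hy hγ)
  · exact (hF β y hy).1.1

variable (E) in
theorem exists_isOrdinal_enumerates (A : X) : ∃ α f, IsOrdinal E α ∧ Enumerates E f α A := by
  obtain ⟨c, hc⟩ := exists_isChoiceFunction E A
  have hB := isRecursionClause_zermeloClause hc
  obtain ⟨D, hD_ord, hD⟩ := exists_isOrdinal_mem_iff_recValue hc
  set F := RecValue E (ZermeloClause E A c)
  have hsurj (y : X) (hy : E y A) : ∃ β, F β y := by
    by_contra hyF
    obtain ⟨u, hu⟩ := exists_separation E (fun z => ¬ ∃ β, F β z) A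
    have huA : SubE E u A := fun z hz => ((hu z).1 hz).1
    obtain ⟨z, hz, -⟩ := hc u huA ⟨y, (hu y).2 ⟨hy, hyF⟩⟩
    refine mem_irrefl (E := E) D ((hD D).2 ⟨z, RecValue.of_clause hB hD_ord.1
      (fun γ => (hD γ).1) ⟨hD_ord, u, huA, fun x hx => ?_, hz⟩⟩)
    rw [hu, and_iff_right hx]
    exact not_congr (exists_congr fun γ => (and_iff_right_of_imp fun h => (hD γ).2 ⟨x, h⟩).symm)
  obtain ⟨f, hf⟩ := exists_isGraph E F (w := D) fun β hβ =>
    ((hD β).1 hβ).imp fun y hy => ⟨hy, fun z hz => RecValue.unique hB hz hy⟩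
  refine ⟨D, f, hD_ord, fun β _ x _ y _ hx hy => ?_, fun y hy => ?_⟩
  · exact RecValue.unique hB (hf.funApp_iff.1 hx).2 (hf.funApp_iff.1 hy).2
  · obtain ⟨β, hβ⟩ := hsurj y hy
    exact ⟨β, (hD β).2 ⟨y, hβ⟩, hf.funApp_iff.2 ⟨(hD β).2 ⟨y, hβ⟩, hβ⟩⟩

end Model

/-! ## The stratification of the universe -/

section Stages

variable {E : X → X → Prop} {P : X → X → Prop} {α a b f t x y R A B : X}

/-- `f` assigns to the index `a ∈ α` the element `x` of `t`. -/
def EnumValue (E : X → X → Prop) (α t f a x : X) : Prop := E a α ∧ E x t ∧ FunApp E f a x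

/-- The transitive set `t` is enumerated by `f` along `α`. -/
def IsTransEnum (E : X → X → Prop) (α t f : X) : Prop := TransSet E t ∧ Enumerates E f α t

/-- `x` belongs to the stage with index `α`: it is an element of a transitive set that is
enumerated along `α`. When `α` is an infinite cardinal this stage is `H_{≤α}`. -/
def InStage (E : X → X → Prop) (α x : X) : Prop := ∃ t f, IsTransEnum E α t f ∧ E x t

/-- `A` is the set of all elements of the stage with index `α`. -/
def IsStage (E : X → X → Prop) (α A : X) : Prop := ∀ x, E x A ↔ InStage E α x

/-- The relation that membership on `t` induces on the indices of its elements. The pairs `(a, a)`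
record which indices are in use. -/
def IndexRel (E : X → X → Prop) (t f a b : X) : Prop :=
  ∃ x, E x t ∧ FunApp E f a x ∧ ∃ y, E y t ∧ FunApp E f b y ∧ (a = b ∨ E x y)

/-- The relation `R` on `α` codes the transitive set `t`, enumerated along `α` by `f`. -/
def IsCode (E : X → X → Prop) (α R t f : X) : Prop :=
  IsTransEnum E α t f ∧ ∀ a, E a α → ∀ b, E b α → (FunApp E R a b ↔ IndexRel E t f a b)

/-- Each element of `A` has a `P`-successor in the stage with index `α`. -/
def SuccessorsInStage (E : X → X → Prop) (P : X → X → Prop) (A α : X) : Prop :=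
  ∀ x, E x A → ∃ y, InStage E α y ∧ P x y

/-- `B` is the first stage in which each element of `A` has a `P`-successor. -/
def IsSuccessorStage (E : X → X → Prop) (P : X → X → Prop) (A B : X) : Prop :=
  ∃ α, IsOrdinal E α ∧ IsStage E α B ∧ SuccessorsInStage E P A α ∧
    ∀ β, E β α → ¬ SuccessorsInStage E P A β

theorem IsTransEnum.unique (h : IsTransEnum E α t f) (hx : EnumValue E α t f a x)
    (hy : EnumValue E α t f a y) : x = y :=
  h.2.1 a hx.1 x hx.2.1 y hy.2.1 hx.2.2 hy.2.2

theorem IsTransEnum.exists_enumValue (h : IsTransEnum E α t f) (hx : E x t) :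
    ∃ a, EnumValue E α t f a x :=
  (h.2.2 x hx).imp fun _ ha => ⟨ha.1, hx, ha.2⟩

theorem IsCode.exists_enumValue (h : IsCode E α R t f) (ha : E a α) (hb : E b α)
    (hab : FunApp E R a b) : ∃ x, EnumValue E α t f a x := by
  obtain ⟨x, hx, hax, -⟩ := (h.2 a ha b hb).1 hab
  exact ⟨x, ha, hx, hax⟩

theorem IsCode.funApp_iff (h : IsCode E α R t f) (hx : EnumValue E α t f a x)
    (hy : EnumValue E α t f b y) : FunApp E R a b ↔ a = b ∨ E x y := by
  rw [h.2 a hx.1 b hy.1]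
  refine ⟨fun ⟨x', hx', hax', y', hy', hby', h'⟩ => ?_,
    fun h' => ⟨x, hx.2.1, hx.2.2, y, hy.2.1, hy.2.2, h'⟩⟩
  rwa [h.1.unique hx ⟨hx.1, hx', hax'⟩, h.1.unique hy ⟨hy.1, hy', hby'⟩]

theorem isStage_iff : IsStage E α A ↔
    (∀ x, E x A → InStage E α x) ∧ ∀ x t f, IsTransEnum E α t f ∧ E x t → E x A := by
  simp only [IsStage, InStage, iff_iff_implies_and_implies, forall_and, forall_exists_index]

theorem IsSuccessorStage.exists_mem (h : IsSuccessorStage E P A B) (hx : E x A) :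
    ∃ y, E y B ∧ P x y := by
  obtain ⟨α, -, hB, hα, -⟩ := h
  exact (hα x hx).imp fun y hy => ⟨(hB y).2 hy.1, hy.2⟩

end Stages

section Model

variable {E : X → X → Prop} [hE : MOSTColl E] {P : X → X → Prop} {α a b f t x y R A B t' f' : X}

instance : Delta0Def E fun q : X × X × X => IsTransEnum E q.1 q.2.1 q.2.2 := by
  unfold IsTransEnum; infer_instance

instance {k : ℕ} [HierarchyLevel E k] [NeZero k] :
    SigmaDef E k fun q : X × X => InStage E q.1 q.2 := by
  unfold InStage; infer_instance

set_option synthInstance.maxSize 256 in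
instance : Delta0Def E fun q : X × X × X × X => IndexRel E q.1 q.2.1 q.2.2.1 q.2.2.2 := by
  unfold IndexRel; infer_instance

instance : Delta0Def E fun q : X × X × X × X => IsCode E q.1 q.2.1 q.2.2.1 q.2.2.2 := by
  unfold IsCode; infer_instance

instance : SigmaDef E 2 fun q : X × X => IsStage E q.1 q.2 := by
  simp only [isStage_iff]; infer_instance

theorem IsStage.unique (hA : IsStage E α A) (hB : IsStage E α B) : A = B :=
  eq_of_forall_mem_iff fun x => (hA x).trans (hB x).symm

theorem IsCode.mem_iff (h : IsCode E α R t f) (hx : EnumValue E α t f a x)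
    (hy : EnumValue E α t f b y) : E x y ↔ a ≠ b ∧ FunApp E R a b := by
  have hne : E x y → a ≠ b := by
    rintro hxy rfl
    obtain rfl := h.1.unique hx hy
    exact mem_irrefl x hxy
  rw [h.funApp_iff hx hy]
  tauto

theorem IsCode.enumValue (h : IsCode E α R t f) (h' : IsCode E α R t' f')
    (hx : EnumValue E α t f a x) : EnumValue E α t' f' a x := by
  suffices ∀ a, E a α → E x t → FunApp E f a x → E x t' ∧ FunApp E f' a x from
    ⟨hx.1, this a hx.1 hx.2.1 hx.2.2⟩
  refine mem_induction E
    (P := fun x => ∀ a, E a α → E x t → FunApp E f a x → E x t' ∧ FunApp E f' a x)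
    (fun x ih a ha hxt hax => ?_) x
  have hx : EnumValue E α t f a x := ⟨ha, hxt, hax⟩
  have ih' (z b : X) (hzx : E z x) (hz : EnumValue E α t f b z) : EnumValue E α t' f' b z :=
    ⟨hz.1, ih z hzx b hz.1 hz.2.1 hz.2.2⟩
  obtain ⟨x', hx'⟩ := h'.exists_enumValue ha ha ((h.funApp_iff hx hx).2 (.inl rfl))
  suffices x = x' from this ▸ hx'.2
  refine eq_of_forall_mem_iff (E := E) fun z => ⟨fun hz => ?_, fun hz => ?_⟩
  · obtain ⟨b, hb⟩ := h.1.exists_enumValue (h.1.1 x hxt z hz)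
    exact (h'.mem_iff (ih' z b hz hb) hx').2 ((h.mem_iff hb hx).1 hz)
  · obtain ⟨b, hb⟩ := h'.1.exists_enumValue (h'.1.1 x' hx'.2.1 z hz)
    have hba := (h'.mem_iff hb hx').1 hz
    obtain ⟨w, hw⟩ := h.exists_enumValue hb.1 ha hba.2
    have hwx := (h.mem_iff hw hx).2 hba
    exact h'.1.unique (ih' w b hwx hw) hb ▸ hwx

theorem IsCode.unique (h : IsCode E α R t f) (h' : IsCode E α R t' f') : t = t' := by
  have aux {s g s' g' : X} (h : IsCode E α R s g) (h' : IsCode E α R s' g') (x : X)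
      (hx : E x s) : E x s' := by
    obtain ⟨a, ha⟩ := h.1.exists_enumValue hx
    exact (h.enumValue h' ha).2.1
  exact eq_of_forall_mem_iff fun x => ⟨aux h h' x, aux h' h x⟩

theorem IsTransEnum.exists_isCode (h : IsTransEnum E α t f) {c : X}
    (hc : IsGraph E c fun a b => E a α ∧ E b α) : ∃ R, SubE E R c ∧ IsCode E α R t f := by
  obtain ⟨R, hR⟩ := exists_separation E (fun q => ∃ a b, IsPair E q a b ∧ IndexRel E t f a b) c
  refine ⟨R, fun q hq => ((hR q).1 hq).1, h, fun a ha b hb => ⟨?_, fun hab => ?_⟩⟩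
  · rintro ⟨q, hq, hqab⟩
    obtain ⟨-, a', b', hqab', hab⟩ := (hR q).1 hq
    obtain ⟨rfl, rfl⟩ := hqab.inj hqab'
    exact hab
  · obtain ⟨q, hq⟩ := exists_isPair E a b
    exact ⟨q, (hR q).2 ⟨(hc q).2 ⟨a, b, hq, ha, hb⟩, a, b, hq, hab⟩, hq⟩

variable (E) in
-- The stage is the union of the sets `t` that have a code `R ⊆ α × α`.
theorem exists_isStage (α : X) : ∃ A, IsStage E α A := by
  obtain ⟨c, hc⟩ := exists_prod E α α
  obtain ⟨p, hp⟩ := powerAx E c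
  obtain ⟨Rs, hRs⟩ := exists_separation E (fun R => ∃ t f, IsCode E α R t f) p
  obtain ⟨T, hT⟩ := exists_image E (fun R t => ∃ f, IsCode E α R t f) (w := Rs) fun R hR =>
    ((hRs R).1 hR).2.imp fun t ht => ⟨ht, fun t' ⟨f', hf'⟩ => hf'.unique ht.choose_spec⟩
  obtain ⟨A, hA⟩ := unionAx E T
  refine ⟨A, fun x => (hA x).trans ⟨fun ⟨t, ht, hx⟩ => ?_, fun ⟨t, f, hf, hx⟩ => ?_⟩⟩
  · obtain ⟨R, -, f, hf⟩ := (hT t).1 ht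
    exact ⟨t, f, hf.1, hx⟩
  · obtain ⟨R, hRc, hR⟩ := hf.exists_isCode hc
    exact ⟨t, (hT t).2 ⟨R, (hRs R).2 ⟨(hp R).2 hRc, t, f, hR⟩, f, hR⟩, hx⟩

variable (E) in
theorem exists_isOrdinal_inStage (A : X) :
    ∃ α, IsOrdinal E α ∧ ∀ x, E x A → InStage E α x := by
  obtain ⟨t, ht, hAt⟩ := exists_transSet_mem E A
  obtain ⟨α, f, hα, hf⟩ := exists_isOrdinal_enumerates E t
  exact ⟨α, hα, fun x hx => ⟨t, f, ⟨ht, hf⟩, ht A hAt x hx⟩⟩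

theorem IsSuccessorStage.unique {B' : X} (hB : IsSuccessorStage E P A B)
    (hB' : IsSuccessorStage E P A B') : B = B' := by
  obtain ⟨α, hα_ord, hαB, hα, hα_min⟩ := hB
  obtain ⟨β, hβ_ord, hβB', hβ, hβ_min⟩ := hB'
  rcases hα_ord.trichotomy hβ_ord with h | rfl | h
  · exact absurd hα (hβ_min α h)
  · exact hαB.unique hβB'
  · exact absurd hβ (hα_min β h)

theorem successorsInStage_iff : SuccessorsInStage E P A α ↔
    ∀ B, IsStage E α B → ∀ x, E x A → ∃ y, E y B ∧ P x y := by
  refine ⟨fun h B hB x hx => (h x hx).imp fun y hy => ⟨(hB y).2 hy.1, hy.2⟩, fun h x hx => ?_⟩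
  obtain ⟨B, hB⟩ := exists_isStage E α
  exact (h B hB x hx).imp fun y hy => ⟨(hB y).1 hy.1, hy.2⟩

variable [hP : SigmaDef E 2 fun q : X × X => P q.1 q.2]

instance : SigmaDef E 2 fun q : X × X => SuccessorsInStage E P q.1 q.2 := by
  unfold SuccessorsInStage; infer_instance

variable [hP' : PiDef E 2 fun q : X × X => P q.1 q.2]

omit hP in
instance : PiDef E 2 fun q : X × X => SuccessorsInStage E P q.1 q.2 := by
  simp only [successorsInStage_iff]; infer_instance

instance : SigmaDef E 2 fun q : X × X => IsSuccessorStage E P q.1 q.2 := by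
  unfold IsSuccessorStage; infer_instance

theorem exists_isSuccessorStage (hP : ∀ x, ∃ y, P x y) (A : X) :
    ∃ B, IsSuccessorStage E P A B := by
  obtain ⟨C, hC, -⟩ := exists_strong_collection E P (w := A) fun x _ => hP x
  obtain ⟨α, hα, hCα⟩ := exists_isOrdinal_inStage E C
  have hAα : SuccessorsInStage E P A α := fun x hx =>
    (hC x hx).imp fun y hy => ⟨hCα y hy.1, hy.2⟩
  obtain ⟨β, ⟨hβ, hAβ⟩, hβ_min⟩ :=
    exists_minimal E (P := fun β => IsOrdinal E β ∧ SuccessorsInStage E P A β) ⟨hα, hAα⟩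
  obtain ⟨B, hB⟩ := exists_isStage E β
  exact ⟨B, β, hβ, hB, hAβ, fun γ hγ hAγ => hβ_min γ hγ ⟨hβ.of_mem hγ, hAγ⟩⟩

end Model

/-! ## Takahashi's class -/

section Model

variable {E : X → X → Prop} [hE : MOSTColl E]

theorem exists_subE_iff {a : X} {Q : X → Prop} : (∃ x, SubE E x a ∧ Q x) ↔
    ∀ p, (∀ z, E z p ↔ SubE E z a) → ∃ x, E x p ∧ Q x := by
  refine ⟨fun ⟨x, hx, h⟩ p hp => ⟨x, (hp x).2 hx, h⟩, fun h => ?_⟩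
  obtain ⟨p, hp⟩ := powerAx E a
  exact (h p hp).imp fun x hx => ⟨(hp x).1 hx.1, hx.2⟩

theorem piDef_exists_subE {D : Type u} [VarContext X D] {t : D → X} [ht : CoordMap X t]
    {Q : D → X → Prop} (hQ : PiDef E 2 fun q : D × X => Q q.1 q.2) :
    PiDef E 2 fun d => ∃ x, SubE E x (t d) ∧ Q d x := by
  have : PiDef E 2 fun q : (D × X) × X => Q q.1.1 q.2 :=
    hQ.comp (g := fun q : (D × X) × X => (q.1.1, q.2)) inferInstance
  have : CoordMap X fun q : (D × X) × X => t q.1.1 := ht.comp inferInstance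
  simp only [exists_subE_iff]
  infer_instance

theorem sigmaDef_forall_subE {D : Type u} [VarContext X D] {t : D → X} [CoordMap X t]
    {Q : D → X → Prop} (hQ : SigmaDef E 2 fun q : D × X => Q q.1 q.2) :
    SigmaDef E 2 fun d => ∀ x, SubE E x (t d) → Q d x := by
  have := piDef_exists_subE (E := E) (t := t) (Q := fun d x => ¬ Q d x) inferInstance
  simpa only [not_exists, not_and, not_not] using
    SigmaDef.not (P := fun d => ∃ x, SubE E x (t d) ∧ ¬ Q d x)

theorem SF.IsDelta0P.sigmaDef_and_piDef {n : ℕ} {φ : SF n} (hφ : φ.IsDelta0P) :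
    SigmaDef E 2 (fun v => φ.Eval E v) ∧ PiDef E 2 fun v => φ.Eval E v := by
  have snoc {m : ℕ} {ψ : SF (m + 1)} (h : SigmaDef E 2 (fun v => ψ.Eval E v) ∧
      PiDef E 2 fun v => ψ.Eval E v) :
      SigmaDef E 2 (fun q : (Fin m → X) × X => ψ.Eval E (Fin.snoc q.1 q.2)) ∧
        PiDef E 2 fun q : (Fin m → X) × X => ψ.Eval E (Fin.snoc q.1 q.2) :=
    ⟨h.1.comp .snoc, h.2.comp .snoc⟩
  induction φ with
  | mem i j | eq i j => constructor <;> (simp only [SF.Eval]; infer_instance)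
  | not φ ih =>
    obtain ⟨_, _⟩ := ih hφ
    constructor <;> (simp only [SF.Eval]; infer_instance)
  | and φ ψ ihφ ihψ | or φ ψ ihφ ihψ =>
    obtain ⟨_, _⟩ := ihφ hφ.1
    obtain ⟨_, _⟩ := ihψ hφ.2
    constructor <;> (simp only [SF.Eval]; infer_instance)
  | bexMem i φ ih | ballMem i φ ih =>
    obtain ⟨_, _⟩ := snoc (ih hφ)
    constructor <;> (simp only [SF.Eval]; infer_instance)
  | bexSub i φ ih =>
    obtain ⟨_, hφ⟩ := snoc (ih hφ)
    simp only [SF.Eval]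
    exact ⟨inferInstance, piDef_exists_subE hφ⟩
  | ballSub i φ ih =>
    obtain ⟨hφ, _⟩ := snoc (ih hφ)
    simp only [SF.Eval]
    exact ⟨sigmaDef_forall_subE hφ, inferInstance⟩
  | ex φ | all φ => exact hφ.elim

end Model

/-! ## Iteration along the standard `ω` -/

/-- `f` enumerates the elements of `w` as the standard von Neumann numerals. -/
structure IsNumeralEnum (E : X → X → Prop) (w : X) (f : ℕ → X) : Prop where
  injective : Function.Injective f
  mem_iff : ∀ x, E x w ↔ ∃ n, x = f n
  mem_numeral_iff : ∀ x n, E x (f n) ↔ ∃ m < n, x = f m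

/-- `F` is the graph of the sequence `f n ↦ a n`. -/
abbrev IsSequence (E : X → X → Prop) (f : ℕ → X) (F : X) (a : ℕ → X) : Prop :=
  IsGraph E F fun x y => ∃ n, x = f n ∧ y = a n

/-- The clause of the recursion on successors whose value is `a` at the empty set and passes
from `z` to some `y` with `S z y` at each successor. -/
def IterClause (E S : X → X → Prop) (a : X) (F : X → X → Prop) (i y : X) : Prop :=
  ((∀ z, ¬ E z i) ∧ y = a) ∨ ∃ j, E j i ∧ SuccOf E j i ∧ ∃ z, F j z ∧ S z y

/-- The function `c` chooses `y` from the set of all `P`-successors of `x` in `H`. -/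
def ChoiceStep (E P : X → X → Prop) (H c x y : X) : Prop :=
  ∃ u, SubE E u H ∧ (∀ z, E z H → (E z u ↔ P x z)) ∧ Chooses E c u y

namespace IsNumeralEnum

variable {E : X → X → Prop} {w : X} {f : ℕ → X}

theorem mem (hf : IsNumeralEnum E w f) (n : ℕ) : E (f n) w := (hf.mem_iff _).2 ⟨n, rfl⟩

theorem not_mem_zero (hf : IsNumeralEnum E w f) (z : X) : ¬ E z (f 0) := by
  simp [hf.mem_numeral_iff]

theorem succOf (hf : IsNumeralEnum E w f) (n : ℕ) : SuccOf E (f n) (f (n + 1)) := fun z => by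
  simp only [hf.mem_numeral_iff, Nat.lt_succ_iff_lt_or_eq, or_and_right, exists_or,
    exists_eq_left]

theorem transSet (hf : IsNumeralEnum E w f) (n : ℕ) : TransSet E (f n) := by
  intro y hy z hz
  obtain ⟨m, hm, rfl⟩ := (hf.mem_numeral_iff y n).1 hy
  obtain ⟨k, hk, rfl⟩ := (hf.mem_numeral_iff z m).1 hz
  exact (hf.mem_numeral_iff _ n).2 ⟨k, hk.trans hm, rfl⟩

end IsNumeralEnum

section Model

variable {E : X → X → Prop} [hE : MOSTColl E] {P S : X → X → Prop}
  {a c i j k w x y y' F H : X} {f : ℕ → X}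

theorem mem_asymm (h : E x y) : ¬ E y x := fun h' => by
  obtain ⟨m, rfl | rfl, hm⟩ := exists_minimal E (P := fun z => z = x ∨ z = y) (.inl rfl)
  exacts [hm y h' (.inr rfl), hm x h (.inl rfl)]

theorem SuccOf.inj (hj : SuccOf E j i) (hk : SuccOf E k i) : j = k := by
  by_contra hjk
  have hjk' : E j k := ((hk j).1 ((hj j).2 (.inr rfl))).resolve_right hjk
  exact mem_asymm hjk' (((hj k).1 ((hk k).2 (.inr rfl))).resolve_right (Ne.symm hjk))

theorem IsOmega.transSet (hw : IsOmega E w) : TransSet E w := by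
  obtain ⟨a, ha⟩ := exists_separation E (fun x => SubE E x w) w
  have ha_ind : InductiveSet E a := by
    obtain ⟨⟨e, hew, he⟩, hsucc⟩ := hw.1
    refine ⟨⟨e, (ha e).2 ⟨hew, fun z hz => absurd hz (he z)⟩, he⟩, fun x hx => ?_⟩
    obtain ⟨hxw, hx⟩ := (ha x).1 hx
    obtain ⟨s, hsw, hs⟩ := hsucc x hxw
    exact ⟨s, (ha s).2 ⟨hsw, fun z hz => ((hs z).1 hz).elim (hx z) (· ▸ hxw)⟩, hs⟩
  exact fun y hy => ((ha y).1 (hw.2 a ha_ind y hy)).2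

theorem OmegaStandard.exists_isNumeralEnum (hstd : OmegaStandard E) (hw : IsOmega E w) :
    ∃ f, IsNumeralEnum E w f := by
  obtain ⟨f, hfw, hwf, hlt⟩ := hstd w hw
  refine ⟨f, .of_lt_imp_ne fun m n hmn hf => ?_, fun x => ⟨hwf x, ?_⟩,
    fun x n => ⟨fun hx => ?_, ?_⟩⟩
  · exact mem_irrefl (f n) (hf ▸ (hlt m n).2 hmn)
  · rintro ⟨n, rfl⟩
    exact hfw n
  · obtain ⟨m, rfl⟩ := hwf x (hw.transSet (f n) (hfw n) x hx)
    exact ⟨m, (hlt m n).1 hx, rfl⟩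
  · rintro ⟨m, hm, rfl⟩
    exact (hlt m n).2 hm

theorem isRecursionClause_iterClause (hS : ∀ x y z, S x y → S x z → y = z) (a : X) :
    IsRecursionClause E (IterClause E S a) where
  congr h := Or.imp_right fun ⟨j, hj, hji, z, hz, hy⟩ => ⟨j, hj, hji, z, (h j hj z).1 hz, hy⟩
  unique {F i y y'} h := by
    rintro (⟨hi, rfl⟩ | ⟨j, hj, hji, z, hz, hy⟩) (⟨hi', rfl⟩ | ⟨j', hj', hji', z', hz', hy'⟩)
    · rfl
    · exact absurd hj' (hi j')
    · exact absurd hj (hi' j)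
    · obtain rfl := hji.inj hji'
      obtain rfl := h j hj z z' hz hz'
      exact hS z y y' hy hy'

set_option synthInstance.maxSize 256 in
instance [SigmaDef E 2 fun q : X × X => S q.1 q.2] :
    SigmaDef E 2 fun q : X × X × X => IterClause E S a (FunApp E q.1) q.2.1 q.2.2 := by
  unfold IterClause; infer_instance

variable (S) in
theorem IsNumeralEnum.exists_isSequence [SigmaDef E 2 fun q : X × X => S q.1 q.2]
    (hf : IsNumeralEnum E w f) (hS : ∀ x y z, S x y → S x z → y = z) {a : ℕ → X}
    (ha : ∀ n, S (a n) (a (n + 1))) : ∃ F, IsSequence E f F a := by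
  have hB := isRecursionClause_iterClause (E := E) hS (a 0)
  have hval (n : ℕ) : RecValue E (IterClause E S (a 0)) (f n) (a n) := by
    induction n using Nat.strong_induction_on with
    | h n ih =>
      refine .of_clause hB (hf.transSet n) (fun x hx => ?_) ?_
      · obtain ⟨m, hm, rfl⟩ := (hf.mem_numeral_iff x n).1 hx
        exact ⟨a m, ih m hm⟩
      · rcases n with - | n
        · exact .inl ⟨hf.not_mem_zero, rfl⟩
        · have hn : E (f n) (f (n + 1)) := (hf.succOf n _).2 (.inr rfl)
          exact .inr ⟨f n, hn, hf.succOf n, a n, ih n n.lt_succ_self, ha n⟩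
  have hval_iff (x y : X) :
      E x w ∧ RecValue E (IterClause E S (a 0)) x y ↔ ∃ n, x = f n ∧ y = a n := by
    rw [hf.mem_iff]
    constructor
    · rintro ⟨⟨n, rfl⟩, hy⟩
      exact ⟨n, rfl, hy.unique hB (hval n)⟩
    · rintro ⟨n, rfl, rfl⟩
      exact ⟨⟨n, rfl⟩, hval n⟩
  obtain ⟨F, hF⟩ := exists_isGraph E (RecValue E (IterClause E S (a 0))) (w := w) fun x hx => by
    obtain ⟨n, rfl⟩ := (hf.mem_iff x).1 hx
    exact ⟨a n, hval n, fun y hy => hy.unique hB (hval n)⟩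
  exact ⟨F, by simpa only [IsGraph, hval_iff] using hF⟩

theorem IsNumeralEnum.existsUnique_funApp {a : ℕ → X} (hf : IsNumeralEnum E w f)
    (hF : IsSequence E f F a) (hx : E x w) : ∃! y, FunApp E F x y := by
  obtain ⟨n, rfl⟩ := (hf.mem_iff x).1 hx
  refine ⟨a n, hF.funApp_iff.2 ⟨n, rfl, rfl⟩, fun y hy => ?_⟩
  obtain ⟨m, hm, rfl⟩ := hF.funApp_iff.1 hy
  rw [hf.injective hm]

theorem IsNumeralEnum.exists_range {a : ℕ → X} (hf : IsNumeralEnum E w f)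
    (hF : IsSequence E f F a) : ∃ A, ∀ y, E y A ↔ ∃ n, y = a n := by
  obtain ⟨A, hA⟩ := exists_image E (FunApp E F) (w := w) fun x hx => hf.existsUnique_funApp hF hx
  refine ⟨A, fun y => (hA y).trans ?_⟩
  simp only [hF.funApp_iff]
  exact ⟨fun ⟨_, _, n, _, hy⟩ => ⟨n, hy⟩, fun ⟨n, hy⟩ => ⟨f n, hf.mem n, n, rfl, hy⟩⟩

theorem IsNumeralEnum.exists_isSequence_singleton {a : ℕ → X} (hf : IsNumeralEnum E w f)
    (hF : IsSequence E f F a) :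
    ∃ G s, (∀ n, IsUnorderedPair E (s n) (a n) (a n)) ∧ IsSequence E f G s := by
  choose s hs using fun n => exists_unorderedPair E (a n) (a n)
  have hs_iff (x V : X) : (E x w ∧ ∃ y, FunApp E F x y ∧ IsUnorderedPair E V y y) ↔
      ∃ n, x = f n ∧ V = s n := by
    simp only [hF.funApp_iff]
    constructor
    · rintro ⟨-, _, ⟨n, rfl, rfl⟩, hV⟩
      exact ⟨n, rfl, hV.unique (hs n)⟩
    · rintro ⟨n, rfl, rfl⟩
      exact ⟨hf.mem n, a n, ⟨n, rfl, rfl⟩, hs n⟩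
  obtain ⟨G, hG⟩ := exists_isGraph E
    (fun x V => ∃ y, FunApp E F x y ∧ IsUnorderedPair E V y y) (w := w) fun x hx => by
      obtain ⟨y, hy, hy_unique⟩ := hf.existsUnique_funApp hF hx
      obtain ⟨V, hV⟩ := exists_unorderedPair E y y
      exact ⟨V, ⟨y, hy, hV⟩, fun V' ⟨y', hy', hV'⟩ => (hy_unique y' hy' ▸ hV').unique hV⟩
  exact ⟨G, s, hs, by simpa only [IsGraph, hs_iff] using hG⟩

theorem ChoiceStep.unique (hc : IsChoiceFunction E c H) (hy : ChoiceStep E P H c x y)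
    (hy' : ChoiceStep E P H c x y') : y = y' := by
  obtain ⟨u, huH, hu, hy⟩ := hy
  obtain ⟨u', hu'H, hu', hy'⟩ := hy'
  obtain rfl := eq_of_subE_of_forall_mem_iff huH hu'H hu hu'
  exact hc.unique huH hy hy'

variable [SigmaDef E 2 fun q : X × X => P q.1 q.2] [PiDef E 2 fun q : X × X => P q.1 q.2]

instance : SigmaDef E 2 fun q : X × X => ChoiceStep E P H c q.1 q.2 := by
  unfold ChoiceStep; infer_instance

theorem exists_choiceStep (hc : IsChoiceFunction E c H) (hx : ∃ y, E y H ∧ P x y) :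
    ∃ y, E y H ∧ P x y ∧ ChoiceStep E P H c x y := by
  obtain ⟨u, hu⟩ := exists_separation E (P x) H
  have huH : SubE E u H := fun z hz => ((hu z).1 hz).1
  obtain ⟨y, hy, -⟩ := hc u huH (hx.imp fun y => (hu y).2)
  obtain ⟨hyH, hxy⟩ := (hu y).1 hy.1
  exact ⟨y, hyH, hxy, u, huH, fun z hz => (hu z).trans (and_iff_right hz), hy⟩

theorem IsNumeralEnum.exists_closed (hf : IsNumeralEnum E w f) (hP : ∀ x, ∃ y, P x y) (b : X) :
    ∃ H, E b H ∧ ∀ x, E x H → ∃ y, E y H ∧ P x y := by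
  choose next hnext using exists_isSuccessorStage (E := E) hP
  obtain ⟨B, hB⟩ := exists_unorderedPair E b b
  let A (n : ℕ) : X := next^[n] B
  have hA (n : ℕ) : IsSuccessorStage E P (A n) (A (n + 1)) := by
    simpa only [A, Function.iterate_succ_apply'] using hnext (A n)
  obtain ⟨F, hF⟩ := hf.exists_isSequence (IsSuccessorStage E P)
    (fun _ _ _ => IsSuccessorStage.unique) hA
  obtain ⟨C, hC⟩ := hf.exists_range hF
  obtain ⟨H, hH⟩ := unionAx E C
  refine ⟨H, (hH b).2 ⟨A 0, (hC _).2 ⟨0, rfl⟩, (hB b).2 (.inl rfl)⟩, fun x hx => ?_⟩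
  obtain ⟨_, hyC, hxy⟩ := (hH x).1 hx
  obtain ⟨n, rfl⟩ := (hC _).1 hyC
  obtain ⟨z, hz, hxz⟩ := (hA n).exists_mem hxy
  exact ⟨z, (hH z).2 ⟨A (n + 1), (hC _).2 ⟨n + 1, rfl⟩, hz⟩, hxz⟩

theorem IsNumeralEnum.exists_dependentChoice (hf : IsNumeralEnum E w f)
    (hP : ∀ x, ∃ y, P x y) (b : X) :
    ∃ F a, a 0 = b ∧ (∀ n, P (a n) (a (n + 1))) ∧ IsSequence E f F a := by
  obtain ⟨H, hbH, hH⟩ := hf.exists_closed hP b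
  obtain ⟨c, hc⟩ := exists_isChoiceFunction E H
  choose! next hnextH hnextP hnext using fun x hx => exists_choiceStep hc (hH x hx)
  let a (n : ℕ) : X := next^[n] b
  have ha_succ (n : ℕ) : a (n + 1) = next (a n) := Function.iterate_succ_apply' next n b
  have haH (n : ℕ) : E (a n) H := by
    induction n with
    | zero => exact hbH
    | succ n ih => exact ha_succ n ▸ hnextH (a n) ih
  obtain ⟨F, hF⟩ := hf.exists_isSequence (ChoiceStep E P H c) (a := a)
    (fun _ _ _ => ChoiceStep.unique hc) fun n => ha_succ n ▸ hnext (a n) (haH n)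
  exact ⟨F, a, rfl, fun n => ha_succ n ▸ hnextP (a n) (haH n), hF⟩

end Model

section Witness

variable {E : X → X → Prop} [hE : MOSTColl E] {G w : X} {f a s : ℕ → X}

theorem IsNumeralEnum.isFuncOn (hf : IsNumeralEnum E w f) (hG : IsSequence E f G a) :
    IsFuncOn E G w := by
  refine ⟨fun q hq => ?_, fun x y y' hy hy' => ?_,
    fun x hx => (hf.existsUnique_funApp hG hx).exists⟩
  · obtain ⟨_, _, hq, n, rfl, rfl⟩ := (hG q).1 hq
    exact ⟨f n, a n, hq, hf.mem n⟩
  · obtain ⟨n, rfl, -⟩ := hG.funApp_iff.1 hy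
    exact (hf.existsUnique_funApp hG (hf.mem n)).unique hy hy'

theorem IsNumeralEnum.isWDCWitness {k : ℕ} {φ : SF (k + 2)} {p : Fin k → X}
    (hf : IsNumeralEnum E w f)
    (ha : ∀ n, φ.Eval E (Fin.snoc (Fin.snoc p (a n)) (a (n + 1))))
    (hs : ∀ n, IsUnorderedPair E (s n) (a n) (a n)) (hG : IsSequence E f G s) :
    IsWDCWitness E φ p w (a 0) G := by
  have hs_iff (n : ℕ) (t : X) : E t (s n) ↔ t = a n := (hs n t).trans or_self_iff
  refine ⟨hf.isFuncOn hG, ⟨f 0, s 0, hf.not_mem_zero, hf.mem 0, hG.funApp_iff.2 ⟨0, rfl, rfl⟩,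
    hs_iff 0⟩, fun m m' V V' _ hmm' _ hV hV' => ?_⟩
  obtain ⟨i, rfl, rfl⟩ := hG.funApp_iff.1 hV
  obtain ⟨j, rfl, rfl⟩ := hG.funApp_iff.1 hV'
  have hj : f j = f (i + 1) :=
    eq_of_forall_mem_iff (E := E) fun z => (hmm' z).trans (hf.succOf i z).symm
  obtain rfl := hf.injective hj
  simp only [hs_iff, forall_eq, exists_eq_left, ha, and_self]

end Witness

/-- every `ω`-standard model of `MOST + Π₁-Collection` satisfies
`Δ₀^𝒫-WDC_ω`. -/
theorem WDC_in_omega_standard_MOST (X : Type u) (E : X → X → Prop)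
    (hM : ModelMOST E) (hColl : CollectionScheme E Pi1C)
    (hstd : OmegaStandard E) : WDComega E := by
  have : MOSTColl E := ⟨hM, hColl⟩
  intro n φ hφ p hp w hw b
  obtain ⟨hφ_sigma, hφ_pi⟩ := SF.IsDelta0P.sigmaDef_and_piDef (E := E) hφ
  have : SigmaDef E 2 fun q : X × X => φ.Eval E (Fin.snoc (Fin.snoc p q.1) q.2) :=
    hφ_sigma.comp inferInstance
  have : PiDef E 2 fun q : X × X => φ.Eval E (Fin.snoc (Fin.snoc p q.1) q.2) :=
    hφ_pi.comp inferInstance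
  obtain ⟨f, hf⟩ := hstd.exists_isNumeralEnum hw
  obtain ⟨F, a, rfl, ha, hF⟩ := hf.exists_dependentChoice
    (P := fun x y => φ.Eval E (Fin.snoc (Fin.snoc p x) y)) hp b
  obtain ⟨G, s, hs, hG⟩ := hf.exists_isSequence_singleton hF
  exact ⟨G, hf.isWDCWitness ha hs hG⟩
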